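/- Let B be a triangulated d-ball with m d-faces and let F_1,…,F_{m−1} be a shelling down of B (so that B shells down to the subcomplex generated by its single remaining d-face F_m). Then for every i∈{1,…,m−1}, the d-face F_i is free for shelling in the complex B_{F_i} := B[F_i,F_{i+1},…,F_m]; that is, the subcomplex of faces of F_i contained in ∂(B_{F_i}) has polyhedron homeomorphic to a closed (d−1)-dimensional ball, where ∂(B_{F_i}) denotes the subcomplex generated by the (d−1)-faces of B_{F_i} contained in exactly one d-face of B_{F_i}. -/

import Mathlib

/-!
STATEMENT 4: If B is a triangulated d-ball with m d-faces and F_1,…,F_{m−1} is a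
shelling down of B (to its single remaining d-face), then every F_i is free for
shelling in B_{F_i} = B[F_i,…,F_m].
-/

open scoped Classical

namespace PaperFormal

variable {V : Type*}

/-- A facet is an inclusion-maximal face. -/
def IsFacet (K : Set (Finset V)) (σ : Finset V) : Prop :=
  σ ∈ K ∧ ∀ τ ∈ K, σ ⊆ τ → σ = τ

/-- `K` is pure of dimension `d`. -/
def PureDim (K : Set (Finset V)) (d : ℕ) : Prop :=
  K.Nonempty ∧ ∀ σ, IsFacet K σ → σ.card = d + 1

/-- `K[θ_1,…,θ_m]` for the list `l = [θ_1,…,θ_m]`. -/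
def generatedByL (K : Set (Finset V)) (l : List (Finset V)) : Set (Finset V) :=
  {τ ∈ K | ∃ θ ∈ l, τ ⊆ θ}

/-- The subcomplex of `K` generated by the faces in `S`. -/
def generatedBy (K S : Set (Finset V)) : Set (Finset V) :=
  {τ ∈ K | ∃ θ ∈ S, τ ⊆ θ}

/-- The shelling-down condition for the first `k` entries of `l`. -/
def DownSteps (K : Set (Finset V)) (d : ℕ) (l : List (Finset V)) (k : ℕ) : Prop :=
  ∀ i, i < k →
    PureDim (generatedByL K [l.getD i ∅] ∩ generatedByL K (l.drop (i + 1))) (d - 1)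

/-- The first `k` entries of `l` (which enumerates all facets of `K`) form a
shelling down of `K`. -/
def IsShellingDown (K : Set (Finset V)) (d : ℕ) (l : List (Finset V)) (k : ℕ) : Prop :=
  l.Nodup ∧ (∀ σ, σ ∈ l ↔ IsFacet K σ) ∧ k + 1 ≤ l.length ∧ DownSteps K d l k

/-- The boundary of a pure `d`-dimensional complex `K`: the subcomplex generated
by the `(d−1)`-faces (cardinality `d`) contained in exactly one `d`-face
(cardinality `d+1`). -/
def bdry (K : Set (Finset V)) (d : ℕ) : Set (Finset V) :=
  generatedBy K {σ : Finset V | σ ∈ K ∧ σ.card = d ∧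
    ∃! F, F ∈ K ∧ F.card = d + 1 ∧ σ ⊆ F}

/-- The polyhedron of a collection of geometric faces. -/
def poly {N : ℕ} (S : Set (Finset (EuclideanSpace ℝ (Fin N)))) :
    Set (EuclideanSpace ℝ (Fin N)) :=
  ⋃ σ ∈ S, convexHull ℝ (σ : Set (EuclideanSpace ℝ (Fin N)))

/-- `S` is homeomorphic to the closed `d`-dimensional ball. -/
def IsBallSet {N : ℕ} (d : ℕ) (S : Set (EuclideanSpace ℝ (Fin N))) : Prop :=
  Nonempty (↥S ≃ₜ ↥(Metric.closedBall (0 : EuclideanSpace ℝ (Fin d)) 1))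



abbrev ES (n : ℕ) := EuclideanSpace ℝ (Fin n)

theorem det_interp (n : ℕ) (ε : ℝ) (hε : 0 < ε) :
    ∃ (s : Finset ℕ) (v L : ℕ → ℝ), (∀ j ∈ s, 0 ≤ v j ∧ v j ≤ ε) ∧ (∑ j ∈ s, L j = 1) ∧
      ∀ A : EuclideanSpace ℝ (Fin n) →L[ℝ] EuclideanSpace ℝ (Fin n),
        (1 + A).det = ∑ j ∈ s, L j * (1 + v j • A).det := by
  have hn : (0:ℝ) < n + 1 := by positivity
  set v : ℕ → ℝ := fun j => ε * j / (n + 1) with hv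
  have hinj : Set.InjOn v (Finset.range (n+1) : Finset ℕ) := by
    intro a _ b _ h
    simp only [hv] at h
    field_simp at h
    exact_mod_cast h
  refine ⟨Finset.range (n+1), v, fun j => (Lagrange.basis (Finset.range (n+1)) v j).eval 1, ?_, ?_, ?_⟩
  · intro j hj
    have : (j:ℝ) ≤ n + 1 := by
      have := Finset.mem_range.1 hj
      exact_mod_cast this.le
    refine ⟨by simp only [hv]; positivity, ?_⟩
    simp only [hv]
    rw [div_le_iff₀ hn]
    gcongr
  · have := Lagrange.sum_basis hinj (by simp)
    have h2 := congrArg (Polynomial.eval 1) this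
    simpa [Polynomial.eval_finsetSum] using h2
  · intro A
    set b := (EuclideanSpace.basisFun (Fin n) ℝ).toBasis
    set M := LinearMap.toMatrix b b A.toLinearMap with hM
    set P : Polynomial ℝ := ((Polynomial.X : Polynomial ℝ) • M.map Polynomial.C + (1 : Matrix (Fin n) (Fin n) ℝ).map Polynomial.C).det with hP
    have hdeg : P.degree < (Finset.range (n+1)).card := by
      have := Polynomial.natDegree_det_X_add_C_le M 1
      rw [← hP] at this
      simp only [Fintype.card_fin] at this
      rw [Finset.card_range]
      exact lt_of_le_of_lt Polynomial.degree_le_natDegree (by exact_mod_cast Nat.lt_succ_of_le this)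
    have hev : ∀ t : ℝ, P.eval t = (1 + t • A).det := by
      intro t
      have h1 : P.eval t = (t • M + 1).det := by
        rw [hP, ← Polynomial.coe_evalRingHom, RingHom.map_det]
        congr 1
        ext i j
        simp [Matrix.one_apply]
        split_ifs <;> simp [mul_comm]
      rw [h1, ContinuousLinearMap.det, ← LinearMap.det_toMatrix b]
      congr 1
      rw [hM]
      change _ = LinearMap.toMatrix b b ((LinearMap.id : _ →ₗ[ℝ] _) + t • A.toLinearMap)
      rw [map_add, map_smul, LinearMap.toMatrix_id, add_comm]
    have h := Lagrange.eq_interpolate hinj hdeg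
    have h1 := congrArg (Polynomial.eval 1) h
    rw [hev, one_smul] at h1
    rw [h1, Lagrange.interpolate_apply, Polynomial.eval_finsetSum]
    refine Finset.sum_congr rfl fun j _ => ?_
    rw [Polynomial.eval_mul, Polynomial.eval_C, hev, mul_comm]

theorem no_retraction {n : ℕ} (h : ES n → ES n)
    (hc : ContDiff ℝ 1 h) (h1 : ∀ x, ‖h x‖ = 1) (h2 : ∀ x, ‖x‖ = 1 → h x = x) : False := by
  set D : Set (ES n) := Metric.closedBall 0 1 with hD
  have hDc : IsCompact D := isCompact_closedBall _ _
  have hdet0 : ∀ x, (fderiv ℝ h x).det = 0 := by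
    intro x
    by_contra hne
    have hd : HasFDerivAt h (fderiv ℝ h x) x := (hc.differentiable one_ne_zero x).hasFDerivAt
    have hu : IsUnit (LinearMap.det (fderiv ℝ h x).toLinearMap) := isUnit_iff_ne_zero.2 hne
    have hsurj : Function.Surjective (fderiv ℝ h x).toLinearMap :=
      (LinearMap.equivOfDetNeZero _ hne).surjective
    obtain ⟨v, hv⟩ := hsurj (h x)
    have hn := hd.norm_sq
    have hconst : (fun x => ‖h x‖ ^ 2) = fun _ => (1:ℝ) := by
      funext y; rw [h1]; norm_num
    rw [hconst] at hn
    have h0 := hn.unique (hasFDerivAt_const (1:ℝ) x)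
    have h3 := congrArg (fun A => A v) h0
    have hv' : (fderiv ℝ h x) v = h x := hv
    simp [hv', h1] at h3
  set u : (ES n) → (ES n) := fun x => h x - x with hu
  have huc : ContDiff ℝ 1 u := hc.sub contDiff_id
  -- bound on derivative
  obtain ⟨K, hK⟩ : ∃ K, ∀ x ∈ D, ‖fderiv ℝ u x‖ ≤ K :=
    hDc.exists_bound_of_continuousOn (huc.continuous_fderiv one_ne_zero).continuousOn
  set K' : ℝ := max K 1 with hK'
  have hK'pos : 0 < K' := lt_of_lt_of_le one_pos (le_max_right _ _)
  have hlip : ∀ x ∈ D, ∀ y ∈ D, ‖u x - u y‖ ≤ K' * ‖x - y‖ := by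
    intro x hx y hy
    exact (convex_closedBall (0:(ES n)) 1).norm_image_sub_le_of_norm_fderiv_le
      (fun z _ => huc.differentiable one_ne_zero z) (fun z hz => (hK z hz).trans (le_max_left _ _)) hy hx
  -- extended
  set w : (ES n) → (ES n) := fun x => if x ∈ D then u x else 0 with hw
  have hmix : ∀ x ∈ D, ∀ y ∉ D, ‖u x‖ ≤ K' * ‖x - y‖ := by
    intro x hx y hy
    have hcont : ContinuousOn (fun t : ℝ => ‖AffineMap.lineMap x y t‖) (Set.Icc 0 1) := by
      fun_prop
    have hmem : (1:ℝ) ∈ Set.Icc (‖AffineMap.lineMap x y (0:ℝ)‖) (‖AffineMap.lineMap x y (1:ℝ)‖) := by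
      simp only [AffineMap.lineMap_apply_zero, AffineMap.lineMap_apply_one]
      simp only [hD, mem_closedBall_zero_iff, not_le] at hx hy
      exact ⟨hx, hy.le⟩
    obtain ⟨t, ht, htn⟩ := intermediate_value_Icc zero_le_one hcont hmem
    set p := AffineMap.lineMap x y t with hp
    have hpD : p ∈ D := by simp only [hD, mem_closedBall_zero_iff]; exact htn.le
    have hup : u p = 0 := by simp only [hu]; rw [h2 p htn, sub_self]
    have h3 := hlip x hx p hpD
    rw [hup, sub_zero] at h3
    refine h3.trans ?_
    gcongr
    have : x - p = t • (x - y) := by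
      rw [hp, AffineMap.lineMap_apply_module]; module
    rw [this, norm_smul, Real.norm_of_nonneg ht.1]
    exact mul_le_of_le_one_left (norm_nonneg _) ht.2
  have hwlip : ∀ x y, ‖w x - w y‖ ≤ K' * ‖x - y‖ := by
    intro x y
    by_cases hx : x ∈ D <;> by_cases hy : y ∈ D
    · simp only [hw, hx, hy, if_true]; exact hlip x hx y hy
    · simp only [hw, hx, hy, if_true, if_false, sub_zero]; exact hmix x hx y hy
    · simp only [hw, hx, hy, if_true, if_false]
      rw [zero_sub, norm_neg]
      rw [norm_sub_rev x y]; exact hmix y hy x hx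
    · simp only [hw, hx, hy, if_false, sub_self, norm_zero]; positivity
  -- det positivity
  obtain ⟨η, hη, hdetpos⟩ : ∃ η > 0, ∀ A : (ES n) →L[ℝ] (ES n), ‖A‖ < η → 0 < (1 + A).det := by
    have hcd : Continuous (fun A : (ES n) →L[ℝ] (ES n) => (1 + A).det) :=
      ContinuousLinearMap.continuous_det.comp (continuous_const.add continuous_id)
    have : ∀ᶠ A in nhds (0 : (ES n) →L[ℝ] (ES n)), 0 < (1 + A).det := by
      apply hcd.continuousAt.eventually (lt_mem_nhds _)
      simp [ContinuousLinearMap.det]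
    obtain ⟨η, hη, hb⟩ := Metric.eventually_nhds_iff.1 this
    exact ⟨η, hη, fun A hA => hb (by simpa using hA)⟩
  set ε : ℝ := min (1 / (2 * K')) (η / (2 * K')) with hε
  have hεpos : 0 < ε := by positivity
  have hvol : ∀ t, 0 ≤ t → t ≤ ε → ∫ x in D, (1 + t • fderiv ℝ u x).det = ∫ x in D, (1:ℝ) := by
    intro t ht0 htε
    have htK : t * K' ≤ 1 / 2 := by
      have : t ≤ 1 / (2 * K') := htε.trans (min_le_left _ _)
      rw [le_div_iff₀ (by positivity)] at this
      linarith
    have htη : t * K' < η := by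
      have : t ≤ η / (2 * K') := htε.trans (min_le_right _ _)
      rw [le_div_iff₀ (by positivity)] at this
      linarith
    set g : (ES n) → (ES n) := fun x => x + t • u x with hg
    have hder : ∀ x ∈ D, HasFDerivWithinAt g (1 + t • fderiv ℝ u x) D x := by
      intro x _
      have : HasFDerivAt g (1 + t • fderiv ℝ u x) x :=
        (hasFDerivAt_id x).add ((huc.differentiable one_ne_zero x).hasFDerivAt.const_smul t)
      exact this.hasFDerivWithinAt
    have hinj : Set.InjOn g D := by
      intro x hx y hy hxy
      have h3 := hlip x hx y hy
      have h4 : x - y = - (t • (u x - u y)) := by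
        simp only [hg] at hxy
        have : x - y = t • u y - t • u x := by
          rw [sub_eq_sub_iff_add_eq_add, hxy, add_comm]
        rw [this]; module
      have h5 : ‖x - y‖ ≤ t * (K' * ‖x - y‖) := by
        calc ‖x - y‖ = t * ‖u x - u y‖ := by rw [h4, norm_neg, norm_smul, Real.norm_of_nonneg ht0]
          _ ≤ _ := by gcongr
      have h6 : ‖x - y‖ ≤ 1/2 * ‖x - y‖ := by
        nlinarith [norm_nonneg (x - y)]
      have : ‖x - y‖ = 0 := by linarith [norm_nonneg (x - y)]
      exact sub_eq_zero.1 (norm_eq_zero.1 this)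
    have himg : g '' D = D := by
      apply Set.Subset.antisymm
      · rintro _ ⟨x, hx, rfl⟩
        have : g x = (1 - t) • x + t • h x := by simp only [hg, hu]; module
        rw [this]
        have ht1 : t ≤ 1 := by
          have : 1 ≤ K' := le_max_right _ _
          nlinarith
        exact (convex_closedBall (0:(ES n)) 1) hx (by simp [h1]) (by linarith) ht0 (by ring)
      · intro y hy
        have hcon : ContractingWith (1/2 : NNReal) (fun x => y - t • w x) := by
          refine ⟨by norm_num, LipschitzWith.of_dist_le_mul fun a b => ?_⟩
          rw [dist_eq_norm, dist_eq_norm]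
          have : (y - t • w a) - (y - t • w b) = - (t • (w a - w b)) := by module
          rw [this, norm_neg, norm_smul, Real.norm_of_nonneg ht0]
          calc t * ‖w a - w b‖ ≤ t * (K' * ‖a - b‖) := by gcongr; exact hwlip a b
            _ = (t * K') * ‖a - b‖ := by ring
            _ ≤ _ := by
              gcongr
              simpa using htK
        have hfix := hcon.fixedPoint_isFixedPt
        set x := ContractingWith.fixedPoint (fun x => y - t • w x) hcon
        have hx : y - t • w x = x := hfix
        have hxD : x ∈ D := by
          by_contra hxD
          have : w x = 0 := by simp only [hw, hxD, if_false]
          rw [this, smul_zero, sub_zero] at hx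
          exact hxD (hx ▸ hy)
        refine ⟨x, hxD, ?_⟩
        have hwx : w x = u x := by simp only [hw, hxD, if_true]
        rw [hwx] at hx
        simp only [hg]
        nth_rewrite 1 [← hx]
        simp
    have hcv := MeasureTheory.integral_image_eq_integral_abs_det_fderiv_smul MeasureTheory.volume
      hDc.measurableSet hder hinj (fun _ => (1:ℝ))
    rw [himg] at hcv
    rw [hcv]
    refine MeasureTheory.setIntegral_congr_fun hDc.measurableSet fun x hx => ?_
    have hpos : 0 < (1 + t • fderiv ℝ u x).det := by
      apply hdetpos
      rw [norm_smul, Real.norm_of_nonneg ht0]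
      refine lt_of_le_of_lt ?_ htη
      gcongr
      exact (hK x hx).trans (le_max_left _ _)
    simp only [abs_of_pos hpos, smul_eq_mul, mul_one]
  obtain ⟨s, v, L, hv, hL, hA⟩ := det_interp n ε hεpos
  have hfin : ∫ x in D, (1 + fderiv ℝ u x).det = ∫ x in D, (1:ℝ) := by
    rw [MeasureTheory.setIntegral_congr_fun hDc.measurableSet (fun x _ => hA (fderiv ℝ u x))]
    rw [MeasureTheory.integral_finsetSum]
    · simp_rw [MeasureTheory.integral_const_mul]
      rw [Finset.sum_congr rfl fun j hj => by rw [hvol _ (hv j hj).1 (hv j hj).2], ← Finset.sum_mul, hL, one_mul]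
    · intro j _
      apply ContinuousOn.integrableOn_compact hDc
      apply Continuous.continuousOn
      refine continuous_const.mul (ContinuousLinearMap.continuous_det.comp ?_)
      have := huc.continuous_fderiv one_ne_zero
      fun_prop
  have hzero : ∀ x, (1 + fderiv ℝ u x).det = 0 := by
    intro x
    have : fderiv ℝ u x = fderiv ℝ h x - 1 := by
      have := ((hc.differentiable one_ne_zero x).hasFDerivAt.sub (hasFDerivAt_id x)).fderiv
      exact this
    rw [this, add_sub_cancel, hdet0]
  simp_rw [hzero] at hfin
  simp only [MeasureTheory.integral_zero, MeasureTheory.integral_const, smul_eq_mul, mul_one] at hfin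
  have hposm : 0 < MeasureTheory.volume D := Metric.measure_closedBall_pos _ _ one_pos
  have hlt : MeasureTheory.volume D < ⊤ := hDc.measure_lt_top
  have := ENNReal.toReal_pos hposm.ne' hlt.ne
  simp only [MeasureTheory.measureReal_def, MeasureTheory.Measure.restrict_apply_univ] at hfin
  linarith


theorem exists_zero {n : ℕ} (g : ES n → ES n) (hg : ContinuousOn g (Metric.closedBall 0 1))
    (hclose : ∀ x, ‖x‖ ≤ 1 → ‖g x - x‖ ≤ 1/2) : ∃ x, ‖x‖ ≤ 1 ∧ g x = 0 := by
  by_contra! hne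
  set D : Set (ES n) := Metric.closedBall 0 1 with hD
  have hmem : ∀ x, x ∈ D ↔ ‖x‖ ≤ 1 := fun x => by simp [hD]
  have hDc : IsCompact D := isCompact_closedBall _ _
  obtain ⟨m, hm, hmin⟩ : ∃ m > 0, ∀ x ∈ D, m ≤ ‖g x‖ := by
    obtain ⟨x0, hx0, h⟩ := hDc.exists_isMinOn ⟨0, by simp [hD]⟩ hg.norm
    exact ⟨‖g x0‖, norm_pos_iff.2 (hne x0 ((hmem _).1 hx0)), fun x hx => h hx⟩
  obtain ⟨G, hG⟩ := ContinuousMap.exists_restrict_eq (Y := ES n) (hDc.isClosed) ⟨D.domRestrict g, hg.domRestrict⟩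
  have hGD : ∀ x ∈ D, G x = g x := fun x hx => by
    have := congrArg (fun F => F ⟨x, hx⟩) hG
    exact this
  obtain ⟨g1, hg1, hg1d, -⟩ := G.continuous.exists_contDiff_approx 1 (ε := fun _ => min (m/2) (1/8))
    continuous_const (fun _ => by positivity)
  have hd : ∀ x ∈ D, ‖g1 x - g x‖ < min (m/2) (1/8) := fun x hx => by
    have := hg1d x
    rwa [hGD x hx, dist_eq_norm] at this
  let χ : ContDiffBump (0 : ES n) := ⟨3/4, 1, by norm_num, by norm_num⟩
  set g2 : ES n → ES n := fun x => x + χ x • (g1 x - x) with hg2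
  have hg2c : ContDiff ℝ 1 g2 := contDiff_id.add (χ.contDiff.smul (hg1.sub contDiff_id))
  have hout : ∀ x, 1 ≤ ‖x‖ → g2 x = x := by
    intro x hx
    have : χ x = 0 := χ.zero_of_le_dist (by simpa using hx)
    simp [hg2, this]
  have hnz : ∀ x, g2 x ≠ 0 := by
    intro x
    by_cases hx1 : 1 ≤ ‖x‖
    · rw [hout x hx1]
      intro h; rw [h] at hx1; simp at hx1; linarith
    push Not at hx1
    have hxD : x ∈ D := (hmem x).2 hx1.le
    by_cases hx2 : ‖x‖ ≤ 3/4
    · have h1 : χ x = 1 := χ.one_of_mem_closedBall (by simpa using hx2)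
      have : g2 x = g1 x := by simp [hg2, h1]
      rw [this]
      intro h0
      have h2 := hd x hxD
      rw [h0, zero_sub, norm_neg] at h2
      have := hmin x hxD
      have := lt_of_lt_of_le h2 (min_le_left _ _)
      linarith
    · push Not at hx2
      intro h0
      have h1 : x = - (χ x • (g1 x - x)) := eq_neg_of_add_eq_zero_left h0
      have h2 : ‖x‖ ≤ ‖g1 x - x‖ := by
        calc ‖x‖ = ‖χ x • (g1 x - x)‖ := by nth_rewrite 1 [h1]; rw [norm_neg]
          _ = χ x * ‖g1 x - x‖ := by rw [norm_smul, Real.norm_of_nonneg χ.nonneg]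
          _ ≤ _ := mul_le_of_le_one_left (norm_nonneg _) χ.le_one
      have h3 : ‖g1 x - x‖ ≤ ‖g1 x - g x‖ + ‖g x - x‖ := norm_sub_le_norm_sub_add_norm_sub _ _ _
      have h4 := lt_of_lt_of_le (hd x hxD) (min_le_right _ _)
      have h5 := hclose x hx1.le
      linarith
  refine no_retraction (fun x => ‖g2 x‖⁻¹ • g2 x) ?_ ?_ ?_
  · exact ((hg2c.norm ℝ hnz).inv (fun x => norm_ne_zero_iff.2 (hnz x))).smul hg2c
  · intro x
    rw [norm_smul, norm_inv, norm_norm, inv_mul_cancel₀ (norm_ne_zero_iff.2 (hnz x))]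
  · intro x hx
    simp only [hout x hx.ge, hx, inv_one, one_smul]

/-- Invariance of domain, unit ball version. -/
theorem iod_unit {n : ℕ} (f : ES n → ES n) (hf : ContinuousOn f (Metric.closedBall 0 1))
    (hinj : Set.InjOn f (Metric.closedBall 0 1)) : f '' Metric.closedBall 0 1 ∈ nhds (f 0) := by
  set D : Set (ES n) := Metric.closedBall 0 1 with hD
  have hmem : ∀ x, x ∈ D ↔ ‖x‖ ≤ 1 := fun x => by simp [hD]
  have hDc : IsCompact D := isCompact_closedBall _ _
  have h0D : (0 : ES n) ∈ D := by simp [hD]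
  set K := f '' D with hK
  have hKc : IsCompact K := hDc.image_of_continuousOn hf
  -- the inverse
  obtain ⟨G, hG⟩ : ∃ G : C(ES n, ES n), ∀ x ∈ D, G (f x) = x := by
    have : CompactSpace D := isCompact_iff_compactSpace.1 hDc
    have he : Topology.IsClosedEmbedding (D.domRestrict f) :=
      (hf.domRestrict).isClosedEmbedding ((Set.injOn_iff_injective).1 hinj)
    obtain ⟨G, hG⟩ := ContinuousMap.exists_extension (Y := ES n) he ⟨Subtype.val, continuous_subtype_val⟩
    refine ⟨G, fun x hx => ?_⟩
    have := congrArg (fun F => F ⟨x, hx⟩) hG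
    exact this
  set a := f 0 with ha
  have hGa : G a = 0 := hG 0 h0D
  by_contra hnot
  obtain ⟨r, hr, hrG⟩ : ∃ r > 0, ∀ y, dist y a < r → ‖G y‖ ≤ 1/10 := by
    have h1 : ∀ᶠ y in nhds a, ‖G y‖ < 1/10 := by
      apply (G.continuous.norm.continuousAt).eventually (gt_mem_nhds _)
      simp only [hGa]; norm_num
    obtain ⟨r, hr, h⟩ := Metric.eventually_nhds_iff.1 h1
    exact ⟨r, hr, fun y hy => (h hy).le⟩
  set ε := r / 3 with hε
  have hεp : 0 < ε := by positivity
  obtain ⟨c, hca, hcK⟩ : ∃ c, dist c a < ε ∧ c ∉ K := by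
    by_contra! h
    exact hnot (Filter.mem_of_superset (Metric.ball_mem_nhds a hεp) (fun c hc => h c hc))
  have hcG : ∀ y, ‖y - c‖ ≤ ε → ‖G y‖ ≤ 1/10 := by
    intro y hy
    apply hrG
    have := dist_triangle y c a
    rw [dist_eq_norm y c] at this
    linarith
  set S1 : Set (ES n) := K ∩ {y | ε ≤ ‖y - c‖} with hS1
  have hS1c : IsCompact S1 := hKc.inter_right (isClosed_le continuous_const (by fun_prop))
  have hS1n : ∀ y ∈ S1, G y ≠ 0 := by
    rintro y ⟨⟨x, hx, rfl⟩, hy⟩ h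
    rw [hG x hx] at h
    subst h
    rw [dist_comm, dist_eq_norm] at hca
    exact absurd hca (not_lt.2 hy)
  obtain ⟨δ, hδ, hδ1, hδG⟩ : ∃ δ > 0, δ ≤ 1/10 ∧ ∀ y ∈ S1, δ ≤ ‖G y‖ := by
    rcases S1.eq_empty_or_nonempty with h | h
    · exact ⟨1/10, by norm_num, le_rfl, by simp [h]⟩
    · obtain ⟨x0, hx0, hmin⟩ := hS1c.exists_isMinOn h G.continuous.norm.continuousOn
      exact ⟨min (1/10) ‖G x0‖, lt_min (by norm_num) (norm_pos_iff.2 (hS1n x0 hx0)), min_le_left _ _,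
        fun y hy => (min_le_right _ _).trans (hmin hy)⟩
  obtain ⟨P, hP, hPd, -⟩ := G.continuous.exists_contDiff_approx 1 (ε := fun _ => δ / 2)
    continuous_const (fun _ => by positivity)
  have hnull : MeasureTheory.volume (P '' Metric.sphere c ε) = 0 :=
    MeasureTheory.addHaar_image_eq_zero_of_differentiableOn_of_addHaar_eq_zero _
      (hP.differentiable one_ne_zero).differentiableOn
      (MeasureTheory.Measure.addHaar_sphere_of_ne_zero _ _ hεp.ne')
  obtain ⟨b, hb, hbP⟩ : ∃ b ∈ Metric.ball (0 : ES n) (δ/2), b ∉ P '' Metric.sphere c ε := by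
    by_contra! h
    have h1 := MeasureTheory.measure_mono_null h hnull
    exact (Metric.measure_ball_pos MeasureTheory.volume (0 : ES n) (half_pos hδ)).ne' h1
  have hPG : ∀ y, ‖(P y - b) - G y‖ < δ := by
    intro y
    have h1 := hPd y
    rw [dist_eq_norm] at h1
    have h2 : ‖b‖ < δ / 2 := by simpa using hb
    calc ‖(P y - b) - G y‖ = ‖(P y - G y) - b‖ := by congr 1; abel
      _ ≤ ‖P y - G y‖ + ‖b‖ := norm_sub_le _ _
      _ < δ := by linarith
  set Φ : ES n → ES n := fun y => c + (max (ε / ‖y - c‖) 1) • (y - c) with hΦ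
  have hyc : ∀ y ∈ K, 0 < ‖y - c‖ := fun y hy => norm_pos_iff.2 (sub_ne_zero.2 (fun h => hcK (h ▸ hy)))
  have hΦbig : ∀ y ∈ K, ε ≤ ‖y - c‖ → Φ y = y := by
    intro y hy h
    have : ε / ‖y - c‖ ≤ 1 := (div_le_one (hyc y hy)).2 h
    simp [hΦ, max_eq_right this]
  have hΦsmall : ∀ y ∈ K, ‖y - c‖ ≤ ε → ‖Φ y - c‖ = ε := by
    intro y hy h
    have h1 : 1 ≤ ε / ‖y - c‖ := (one_le_div (hyc y hy)).2 h
    simp only [hΦ, max_eq_left h1, add_sub_cancel_left]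
    rw [norm_smul, Real.norm_of_nonneg (by positivity), div_mul_cancel₀ _ (hyc y hy).ne']
  have hΦc : ContinuousOn Φ K := by
    have h1 : ContinuousOn (fun y => ε / ‖y - c‖) K :=
      continuousOn_const.div (by fun_prop) (fun y hy => (hyc y hy).ne')
    have h2 : ContinuousOn (fun y => max (ε / ‖y - c‖) 1) K := h1.sup continuousOn_const
    exact continuousOn_const.add (h2.smul (by fun_prop))
  obtain ⟨x, hx1, hx⟩ := exists_zero (fun x => P (Φ (f x)) - b) (by
      refine ContinuousOn.sub ?_ continuousOn_const
      exact hP.continuous.comp_continuousOn (hΦc.comp hf (Set.mapsTo_image f D))) (by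
      intro x hx
      have hxD := (hmem x).2 hx
      have hfK : f x ∈ K := Set.mem_image_of_mem f hxD
      have h1 := hPG (Φ (f x))
      have h2 : ‖G (Φ (f x)) - x‖ ≤ 2/10 := by
        rcases le_total ε ‖f x - c‖ with h | h
        · rw [hΦbig _ hfK h, hG x hxD]; norm_num
        · have h3 := hcG _ (hΦsmall _ hfK h).le
          have h4 := hcG _ h
          rw [hG x hxD] at h4
          have := norm_sub_le (G (Φ (f x))) x
          linarith
      have h3 := norm_sub_le_norm_sub_add_norm_sub (P (Φ (f x)) - b) (G (Φ (f x))) x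
      linarith)
  have hxD := (hmem x).2 hx1
  have hfK : f x ∈ K := Set.mem_image_of_mem f hxD
  rcases le_total ε ‖f x - c‖ with h | h
  · simp only [hΦbig _ hfK h] at hx
    have h1 := hPG (f x)
    rw [hx, zero_sub, norm_neg] at h1
    have := hδG (f x) ⟨hfK, h⟩
    linarith
  · apply hbP
    refine ⟨Φ (f x), ?_, sub_eq_zero.1 hx⟩
    rw [mem_sphere_iff_norm]
    exact hΦsmall _ hfK h

theorem iod {n : ℕ} (f : ES n → ES n) (p : ES n) (r : ℝ) (hr : 0 < r)
    (hf : ContinuousOn f (Metric.closedBall p r))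
    (hinj : Set.InjOn f (Metric.closedBall p r)) : f '' Metric.closedBall p r ∈ nhds (f p) := by
  have hmaps : Set.MapsTo (fun x : ES n => p + r • x) (Metric.closedBall 0 1) (Metric.closedBall p r) := by
    intro x hx
    simp only [mem_closedBall_zero_iff] at hx
    simp only [mem_closedBall_iff_norm, add_sub_cancel_left, norm_smul, Real.norm_of_nonneg hr.le]
    nlinarith
  have := iod_unit (fun x => f (p + r • x)) (hf.comp (by fun_prop) hmaps) (by
    intro x hx y hy h
    have h1 := hinj (hmaps hx) (hmaps hy) h
    simpa [hr.ne'] using h1)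
  simp only [smul_zero, add_zero] at this
  refine Filter.mem_of_superset this ?_
  rintro _ ⟨x, hx, rfl⟩
  exact ⟨_, hmaps hx, rfl⟩


/-- the point with given barycentric weights -/
noncomputable def pt {N : ℕ} (W : ES N →₀ ℝ) : ES N := Finsupp.linearCombination ℝ (id : ES N → ES N) W
/-- total weight -/
noncomputable def tot {N : ℕ} (W : ES N →₀ ℝ) : ℝ := Finsupp.linearCombination ℝ (fun _ : ES N => (1:ℝ)) W

structure IsW {N : ℕ} (F : Finset (ES N)) (W : ES N →₀ ℝ) : Prop where
  supp : ∀ v, v ∉ F → W v = 0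
  nonneg : ∀ v, 0 ≤ W v
  tot1 : tot W = 1

theorem pt_eq {N : ℕ} {F : Finset (ES N)} {W : ES N →₀ ℝ} (h : ∀ v, v ∉ F → W v = 0) :
    pt W = ∑ v ∈ F, W v • v := by
  rw [pt, Finsupp.linearCombination_apply, Finsupp.sum_of_support_subset (s := F)]
  · rfl
  · intro v hv
    by_contra hc
    exact (Finsupp.mem_support_iff.1 hv) (h v hc)
  · simp

theorem tot_eq {N : ℕ} {F : Finset (ES N)} {W : ES N →₀ ℝ} (h : ∀ v, v ∉ F → W v = 0) :
    tot W = ∑ v ∈ F, W v := by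
  rw [tot, Finsupp.linearCombination_apply, Finsupp.sum_of_support_subset (s := F)]
  · simp
  · intro v hv
    by_contra hc
    exact (Finsupp.mem_support_iff.1 hv) (h v hc)
  · simp

theorem mem_hull {N : ℕ} {F : Finset (ES N)} {x : ES N} :
    x ∈ convexHull ℝ (F : Set (ES N)) ↔ ∃ W, IsW F W ∧ pt W = x := by
  rw [Finset.mem_convexHull]
  constructor
  · rintro ⟨w, h0, h1, h2⟩
    have hs : ∀ v, v ∉ F → (Finsupp.onFinset F (fun v => if v ∈ F then w v else 0) (by simp +contextual)) v = 0 := by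
      intro v hv; simp [hv]
    refine ⟨_, ⟨hs, ?_, ?_⟩, ?_⟩
    · intro v
      simp only [Finsupp.onFinset_apply]
      split_ifs with h
      · exact h0 v h
      · rfl
    · rw [tot_eq hs, ← h1]
      exact Finset.sum_congr rfl fun v hv => by simp [hv]
    · rw [pt_eq hs, ← h2, Finset.centerMass_eq_of_sum_1 _ _ h1]
      exact Finset.sum_congr rfl fun v hv => by simp [hv]
  · rintro ⟨W, h, rfl⟩
    have ht : ∑ v ∈ F, W v = 1 := by rw [← tot_eq h.supp, h.tot1]
    refine ⟨W, fun v _ => h.nonneg v, ht, ?_⟩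
    rw [Finset.centerMass_eq_of_sum_1 _ _ ht, pt_eq h.supp]
    rfl

theorem weights_unique_aux {N : ℕ} {F : Finset (ES N)} (hF : AffineIndependent ℝ ((↑) : F → ES N))
    {W W' : ES N →₀ ℝ} (h : ∀ v, v ∉ F → W v = 0) (h' : ∀ v, v ∉ F → W' v = 0) (ht : tot W = tot W')
    (hp : pt W = pt W') : W = W' := by
  rw [affineIndependent_iff] at hF
  rw [tot_eq h, tot_eq h'] at ht
  rw [pt_eq h, pt_eq h'] at hp
  have := hF Finset.univ (fun v => W v - W' v) (by
    rw [Finset.univ_eq_attach, Finset.sum_attach F (fun v => W v - W' v), Finset.sum_sub_distrib, ht, sub_self]) (by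
    rw [Finset.univ_eq_attach, Finset.sum_attach F (fun v => (W v - W' v) • v)]
    simp_rw [sub_smul]
    rw [Finset.sum_sub_distrib, hp, sub_self])
  ext v
  by_cases hv : v ∈ F
  · have := this ⟨v, hv⟩ (Finset.mem_univ _)
    simp only at this
    linarith
  · rw [h v hv, h' v hv]

theorem weights_unique {N : ℕ} (K : Geometry.SimplicialComplex ℝ (ES N)) {F G : Finset (ES N)}
    (hF : F ∈ K.faces) (hG : G ∈ K.faces) {W W' : ES N →₀ ℝ} (hW : IsW F W) (hW' : IsW G W')
    (hp : pt W = pt W') : W = W' := by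
  have h1 : pt W ∈ convexHull ℝ (F : Set (ES N)) := mem_hull.2 ⟨W, hW, rfl⟩
  have h2 : pt W ∈ convexHull ℝ (G : Set (ES N)) := mem_hull.2 ⟨W', hW', hp.symm⟩
  have h3 := K.inter_subset_convexHull hF hG ⟨h1, h2⟩
  rw [← Finset.coe_inter] at h3
  obtain ⟨U, hU, hpU⟩ := mem_hull.1 h3
  have e1 : U = W := weights_unique_aux (K.indep hF)
    (fun v hv => hU.supp v (fun h => hv (Finset.mem_inter.1 h).1)) hW.supp (by rw [hU.tot1, hW.tot1]) hpU
  have e2 : U = W' := weights_unique_aux (K.indep hG)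
    (fun v hv => hU.supp v (fun h => hv (Finset.mem_inter.1 h).2)) hW'.supp (by rw [hU.tot1, hW'.tot1]) (hpU.trans hp)
  rw [← e1, e2]

theorem nbhd {N d : ℕ} (hd : 1 ≤ d) (K : Geometry.SimplicialComplex ℝ (ES N)) (h : ES N → ES d)
    (hc : ContinuousOn h K.space) (hi : Set.InjOn h K.space)
    {τ : Finset (ES N)} {a b : ES N} (haτ : a ∉ τ) (hbτ : b ∉ τ) (hab : a ≠ b) (hcard : τ.card = d)
    (hF : insert a τ ∈ K.faces) (hG : insert b τ ∈ K.faces) {W0 : ES N →₀ ℝ}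
    (hW0 : IsW (insert a τ) W0) (hpos : ∀ v ∈ τ, 0 < W0 v) :
    h '' (convexHull ℝ ((insert a τ : Finset (ES N)) : Set (ES N)) ∪
      convexHull ℝ ((insert b τ : Finset (ES N)) : Set (ES N))) ∈ nhds (h (pt W0)) := by
  have hd0 : (0:ℝ) < d := by exact_mod_cast hd
  obtain ⟨e⟩ : Nonempty (Fin d ≃ τ) := ⟨(Finset.equivFinOfCardEq hcard).symm⟩
  set p : Fin d → ES N := fun j => (e j : ES N) with hp
  have hpτ : ∀ j, p j ∈ τ := fun j => (e j).2
  have hpi : ∀ j k, p j = p k ↔ j = k := fun j k => by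
    simp [hp, Subtype.val_inj]
  have hpa : ∀ j, p j ≠ a := fun j h => haτ (h ▸ hpτ j)
  have hpb : ∀ j, p j ≠ b := fun j h => hbτ (h ▸ hpτ j)
  have hsumτ : ∀ f : ES N → ℝ, ∑ j, f (p j) = ∑ v ∈ τ, f v := by
    intro f
    rw [← Finset.sum_coe_sort τ]
    exact e.sum_comp (fun v : τ => f v)
  set S : ES d → ℝ := fun t => ∑ j, t j with hS
  set α : ES d → ℝ := fun t => max (W0 a - S t) 0 with hα
  set β : ES d → ℝ := fun t => max (S t - W0 a) 0 with hβ
  set c : ES d → Fin d → ℝ := fun t j => W0 (p j) + t j - (2 / d) * β t with hcc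
  set W : ES d → (ES N →₀ ℝ) := fun t =>
    (∑ j, Finsupp.single (p j) (c t j)) + Finsupp.single a (α t) + Finsupp.single b (β t) with hW
  have hWa : ∀ t, W t a = α t := by
    intro t
    simp only [hW, Finsupp.add_apply, Finsupp.finsetSum_apply, Finsupp.single_apply, hpa, if_false,
      Finset.sum_const_zero, hab.symm]
    simp
  have hWb : ∀ t, W t b = β t := by
    intro t
    simp only [hW, Finsupp.add_apply, Finsupp.finsetSum_apply, Finsupp.single_apply, hpb, if_false,
      Finset.sum_const_zero, hab]
    simp
  have hWp : ∀ t k, W t (p k) = c t k := by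
    intro t k
    simp only [hW, Finsupp.add_apply, Finsupp.finsetSum_apply, Finsupp.single_apply, hpi,
      (hpa k).symm, (hpb k).symm, if_false]
    simp
  have hWo : ∀ t v, v ∉ τ → v ≠ a → v ≠ b → W t v = 0 := by
    intro t v hv hva hvb
    have h1 : ∀ j, p j ≠ v := fun j h => hv (h ▸ hpτ j)
    simp only [hW, Finsupp.add_apply, Finsupp.finsetSum_apply, Finsupp.single_apply, h1, if_false,
      hva.symm, hvb.symm]
    simp
  have hpt : ∀ t, pt (W t) = (∑ j, c t j • p j) + α t • a + β t • b := by
    intro t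
    simp [hW, pt, map_add, map_sum, Finsupp.linearCombination_single]
  have hαβ : ∀ t, α t - β t = W0 a - S t := by
    intro t
    simp only [hα, hβ]
    rcases le_total (W0 a) (S t) with h | h
    · rw [max_eq_right (by linarith), max_eq_left (by linarith)]; ring
    · rw [max_eq_left (by linarith), max_eq_right (by linarith)]; ring
  have hW0tot : ∑ v ∈ τ, W0 v + W0 a = 1 := by
    have := hW0.tot1
    rw [tot_eq hW0.supp, Finset.sum_insert haτ] at this
    linarith
  have htot : ∀ t, tot (W t) = 1 := by
    intro t
    have h1 : tot (W t) = (∑ j, c t j) + α t + β t := by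
      simp [hW, tot, map_add, map_sum, Finsupp.linearCombination_single]
    rw [h1]
    simp only [hcc]
    rw [Finset.sum_sub_distrib, Finset.sum_add_distrib, hsumτ (fun v => W0 v)]
    simp only [Finset.sum_const, Finset.card_univ, Fintype.card_fin, nsmul_eq_mul]
    have h2 : (d:ℝ) * (2 / d * β t) = 2 * β t := by field_simp
    rw [h2]
    have h3 := hαβ t
    have : (∑ j, t j) = S t := rfl
    rw [this]
    linarith
  have hcont : Continuous fun t => pt (W t) := by
    simp only [hpt, hcc, hα, hβ, hS]
    fun_prop
  have hW00 : W 0 = W0 := by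
    have hS0 : S 0 = 0 := by simp [hS]
    have hβ0 : β 0 = 0 := by simp only [hβ, hS0]; exact max_eq_right (by linarith [hW0.nonneg a])
    have hα0 : α 0 = W0 a := by simp only [hα, hS0, sub_zero]; exact max_eq_left (hW0.nonneg a)
    ext v
    by_cases hva : v = a
    · rw [hva, hWa, hα0]
    by_cases hvb : v = b
    · rw [hvb, hWb, hβ0, hW0.supp b (by simp [hab.symm, hbτ])]
    by_cases hv : v ∈ τ
    · obtain ⟨j, hj⟩ := e.surjective ⟨v, hv⟩
      have : v = p j := by simp [hp, hj]
      rw [this, hWp]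
      simp [hcc, hβ0]
    · rw [hWo 0 v hv hva hvb, hW0.supp v (by simp [hva, hv])]
  -- small ball
  obtain ⟨r, hr, hrc⟩ : ∃ r > 0, ∀ t ∈ Metric.closedBall (0 : ES d) r, ∀ j, 0 ≤ c t j := by
    have : ∀ᶠ t in nhds (0 : ES d), ∀ j, 0 < c t j := by
      rw [Filter.eventually_all]
      intro j
      have h1 : Continuous fun t => c t j := by simp only [hcc, hβ, hS]; fun_prop
      apply h1.continuousAt.eventually (lt_mem_nhds _)
      change 0 < c 0 j
      rw [← hWp, hW00]
      exact hpos _ (hpτ j)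
    obtain ⟨r, hr, h1⟩ := Metric.nhds_basis_closedBall.eventually_iff.1 this
    exact ⟨r, hr, fun t ht j => (h1 ht j).le⟩
  have hnn : ∀ t ∈ Metric.closedBall (0 : ES d) r, ∀ v, 0 ≤ W t v := by
    intro t ht v
    by_cases hva : v = a
    · rw [hva, hWa]; exact le_max_right _ _
    by_cases hvb : v = b
    · rw [hvb, hWb]; exact le_max_right _ _
    by_cases hv : v ∈ τ
    · obtain ⟨j, hj⟩ := e.surjective ⟨v, hv⟩
      have : v = p j := by simp [hp, hj]
      rw [this, hWp]
      exact hrc t ht j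
    · rw [hWo t v hv hva hvb]
  have hFG : ∀ t ∈ Metric.closedBall (0 : ES d) r, IsW (insert a τ) (W t) ∨ IsW (insert b τ) (W t) := by
    intro t ht
    rcases le_total (W0 a) (S t) with h1 | h1
    · right
      refine ⟨fun v hv => ?_, hnn t ht, htot t⟩
      simp only [Finset.mem_insert, not_or] at hv
      by_cases hva : v = a
      · rw [hva, hWa]; exact max_eq_right (by linarith)
      · exact hWo t v hv.2 hva hv.1
    · left
      refine ⟨fun v hv => ?_, hnn t ht, htot t⟩
      simp only [Finset.mem_insert, not_or] at hv
      by_cases hvb : v = b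
      · rw [hvb, hWb]; exact max_eq_right (by linarith)
      · exact hWo t v hv.2 hv.1 hvb
  have hface : ∀ t ∈ Metric.closedBall (0 : ES d) r, ∃ F ∈ K.faces, IsW F (W t) := by
    intro t ht
    rcases hFG t ht with h1 | h1
    · exact ⟨_, hF, h1⟩
    · exact ⟨_, hG, h1⟩
  have hspace : ∀ t ∈ Metric.closedBall (0 : ES d) r, pt (W t) ∈ K.space := by
    intro t ht
    obtain ⟨F, hF, h1⟩ := hface t ht
    exact K.convexHull_subset_space hF (mem_hull.2 ⟨_, h1, rfl⟩)
  have hiod := iod (fun t => h (pt (W t))) 0 r hr (hc.comp hcont.continuousOn hspace) (by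
    intro t ht t' ht' heq
    have h1 := hi (hspace t ht) (hspace t' ht') heq
    obtain ⟨F1, hF1, hw1⟩ := hface t ht
    obtain ⟨F2, hF2, hw2⟩ := hface t' ht'
    have h2 := weights_unique K hF1 hF2 hw1 hw2 h1
    have hbb : β t = β t' := by rw [← hWb, ← hWb, h2]
    ext j
    have hcj : c t j = c t' j := by rw [← hWp, ← hWp, h2]
    simp only [hcc, hbb] at hcj
    linarith)
  simp only [hW00] at hiod
  refine Filter.mem_of_superset hiod ?_
  rintro _ ⟨t, ht, rfl⟩
  refine ⟨_, ?_, rfl⟩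
  rcases hFG t ht with h1 | h1
  · exact Or.inl (mem_hull.2 ⟨_, h1, rfl⟩)
  · exact Or.inr (mem_hull.2 ⟨_, h1, rfl⟩)

/-- no three facets share a ridge -/
theorem no_three {N d : ℕ} (hd : 1 ≤ d) (K : Geometry.SimplicialComplex ℝ (ES N)) (h : ES N → ES d)
    (hc : ContinuousOn h K.space) (hi : Set.InjOn h K.space)
    {τ : Finset (ES N)} {a b c : ES N} (haτ : a ∉ τ) (hbτ : b ∉ τ) (hcτ : c ∉ τ)
    (hab : a ≠ b) (hac : a ≠ c) (hbc : b ≠ c) (hcard : τ.card = d)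
    (hF : insert a τ ∈ K.faces) (hG : insert b τ ∈ K.faces) (hH : insert c τ ∈ K.faces) : False := by
  have hd0 : (0:ℝ) < d := by exact_mod_cast hd
  set W0 : ES N →₀ ℝ := ∑ v ∈ τ, Finsupp.single v (1 / d : ℝ) with hW0
  have hW0v : ∀ v, W0 v = if v ∈ τ then (1/d:ℝ) else 0 := by
    intro v
    simp only [hW0, Finsupp.finsetSum_apply, Finsupp.single_apply]
    rw [Finset.sum_ite_eq' τ v (fun _ => (1/d:ℝ))]
  have hW0t : tot W0 = 1 := by
    simp [hW0, tot, map_sum, Finsupp.linearCombination_single, hcard, hd0.ne']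
  have hWa : IsW (insert a τ) W0 := by
    refine ⟨fun v hv => ?_, fun v => ?_, hW0t⟩
    · rw [hW0v, if_neg (fun h => hv (Finset.mem_insert_of_mem h))]
    · rw [hW0v]; split_ifs <;> positivity
  have hnb := nbhd hd K h hc hi haτ hbτ hab hcard hF hG hWa (fun v hv => by
    rw [hW0v, if_pos hv]; positivity)
  set U : ℝ → (ES N →₀ ℝ) := fun s => (1 - s) • W0 + Finsupp.single c s with hU
  have hUw : ∀ s ∈ Set.Icc (0:ℝ) 1, IsW (insert c τ) (U s) := by
    intro s hs
    refine ⟨fun v hv => ?_, fun v => ?_, ?_⟩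
    · simp only [Finset.mem_insert, not_or] at hv
      simp [hU, hW0v, hv.2, Finsupp.single_apply, Ne.symm hv.1]
    · simp only [hU, Finsupp.add_apply, Finsupp.smul_apply, hW0v, Finsupp.single_apply, smul_eq_mul]
      have := hs.1; have : 0 ≤ 1 - s := by linarith [hs.2]
      split_ifs <;> positivity
    · have : tot (U s) = (1 - s) * tot W0 + s := by
        simp [hU, tot, map_add, Finsupp.linearCombination_single]
      rw [this, hW0t]; ring
  have hptU : ∀ s, pt (U s) = (1 - s) • pt W0 + s • c := by
    intro s
    simp [hU, pt, map_add, Finsupp.linearCombination_single]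
  have hUc : Continuous fun s => pt (U s) := by
    simp only [hptU]; fun_prop
  have hsp : ∀ s ∈ Set.Icc (0:ℝ) 1, pt (U s) ∈ K.space := fun s hs =>
    K.convexHull_subset_space hH (mem_hull.2 ⟨_, hUw s hs, rfl⟩)
  have hcomp : ContinuousOn (fun s => h (pt (U s))) (Set.Icc 0 1) := hc.comp hUc.continuousOn hsp
  have h0 : pt (U 0) = pt W0 := by rw [hptU]; simp
  have hlim := hcomp 0 (by simp)
  have hlim2 : Filter.Tendsto (fun s => h (pt (U s))) (nhdsWithin 0 (Set.Icc 0 1)) (nhds (h (pt W0))) := by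
    have := hlim.tendsto; rwa [h0] at this
  have hev := hlim2.eventually hnb
  have hmono : nhdsWithin (0:ℝ) (Set.Ioc 0 1) ≤ nhdsWithin 0 (Set.Icc 0 1) := nhdsWithin_mono _ Set.Ioc_subset_Icc_self
  have hne : (nhdsWithin (0:ℝ) (Set.Ioc 0 1)).NeBot := by
    rw [nhdsWithin_Ioc_eq_nhdsGT one_pos]; infer_instance
  have hev2 := hev.filter_mono hmono
  obtain ⟨s, ⟨x, hx, hxs⟩, hs⟩ := (hev2.and self_mem_nhdsWithin).exists
  have hxsp : x ∈ K.space := by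
    rcases hx with hx | hx
    · exact K.convexHull_subset_space hF hx
    · exact K.convexHull_subset_space hG hx
  have hs' := Set.Ioc_subset_Icc_self hs
  have hxe := hi hxsp (hsp s hs') hxs
  have key : ∀ q, q ≠ c → insert q τ ∈ K.faces → x ∈ convexHull ℝ ((insert q τ : Finset (ES N)) : Set (ES N)) → False := by
    intro q hq hqK hxq
    obtain ⟨W, hW, hWx⟩ := mem_hull.1 hxq
    have := weights_unique K hqK hH hW (hUw s hs') (hWx.trans hxe)
    have h1 : W c = 0 := hW.supp c (by simp [hq.symm, hcτ])
    rw [this] at h1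
    simp [hU, hW0v, hcτ] at h1
    exact hs.1.ne' h1
  rcases hx with hx | hx
  · exact key a hac hF hx
  · exact key b hbc hG hx


/-- A triangulated ball has boundary. -/
theorem has_bdry {N d : ℕ} (hd : 1 ≤ d) (K : Geometry.SimplicialComplex ℝ (ES N)) (hfin : K.faces.Finite)
    (h : ES N → ES d) (k : ES d → ES N)
    (hc : ContinuousOn h K.space) (hk : ContinuousOn k (Metric.closedBall 0 1))
    (hhk : ∀ x ∈ K.space, h x ∈ Metric.closedBall 0 1 ∧ k (h x) = x)
    (hkh : ∀ y ∈ Metric.closedBall 0 1, k y ∈ K.space ∧ h (k y) = y)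
    (hpure : ∀ σ ∈ K.faces, ∃ F ∈ K.faces, σ ⊆ F ∧ F.card = d + 1)
    (hcl : ∀ F ∈ K.faces, F.card = d + 1 → ∀ a ∈ F, ∃ b, b ∉ F ∧ insert b (F.erase a) ∈ K.faces) : False := by
  have hi : Set.InjOn h K.space := fun x hx y hy hxy => by
    rw [← (hhk x hx).2, ← (hhk y hy).2, hxy]
  have hsph : ∀ y : ES d, ‖y‖ = 1 → ∃ ρ ∈ K.faces, ρ.card + 1 ≤ d ∧ k y ∈ convexHull ℝ (ρ : Set (ES N)) := by
    intro y hy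
    have hyb : y ∈ Metric.closedBall (0 : ES d) 1 := by simp [hy]
    obtain ⟨hks, hky⟩ := hkh y hyb
    obtain ⟨σ, hσ, hxσ⟩ := Geometry.SimplicialComplex.mem_space_iff.1 hks
    obtain ⟨F, hF, hσF, hFc⟩ := hpure σ hσ
    obtain ⟨W, hW, hWx⟩ := mem_hull.1 (convexHull_mono (Finset.coe_subset.2 hσF) hxσ)
    have hWW : IsW W.support W := ⟨fun v hv => by simpa using hv, hW.nonneg, hW.tot1⟩
    have hsF : W.support ⊆ F := fun v hv => by
      by_contra hc; exact (Finsupp.mem_support_iff.1 hv) (hW.supp v hc)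
    have hsne : W.support.Nonempty := by
      rw [Finsupp.support_nonempty_iff]
      rintro h0
      have := hW.tot1
      rw [h0] at this
      simp [tot] at this
    refine ⟨W.support, K.down_closed hF hsF hsne, ?_, mem_hull.2 ⟨W, hWW, hWx⟩⟩
    by_contra hlt
    have hge : d ≤ W.support.card := by omega
    obtain ⟨a, haF, haτ⟩ : ∃ a ∈ F, F.erase a ⊆ W.support := by
      by_cases hEq : F ⊆ W.support
      · obtain ⟨a, ha⟩ := hsne
        exact ⟨a, hsF ha, (Finset.erase_subset _ _).trans hEq⟩
      · obtain ⟨a, haF, haW⟩ := Finset.not_subset.1 hEq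
        refine ⟨a, haF, ?_⟩
        have h1 : W.support ⊆ F.erase a := fun v hv => Finset.mem_erase.2 ⟨fun h => haW (h ▸ hv), hsF hv⟩
        have h2 : (F.erase a).card ≤ W.support.card := by
          rw [Finset.card_erase_of_mem haF, hFc]; simpa using hge
        exact (Finset.eq_of_subset_of_card_le h1 h2).ge
    obtain ⟨b, hbF, hbK⟩ := hcl F hF hFc a haF
    have hins : insert a (F.erase a) = F := Finset.insert_erase haF
    have hnb := nbhd (a := a) (b := b) (τ := F.erase a) hd K h hc hi (by simp) (fun h => hbF (Finset.mem_of_mem_erase h))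
      (fun h => hbF (h ▸ haF)) (by rw [Finset.card_erase_of_mem haF, hFc]; simp)
      (by rw [hins]; exact hF) hbK (W0 := W) (by rw [hins]; exact hW)
      (fun v hv => lt_of_le_of_ne (hW.nonneg v) (Ne.symm (Finsupp.mem_support_iff.1 (haτ hv))))
    rw [hWx, hky] at hnb
    have hnb2 : Metric.closedBall (0 : ES d) 1 ∈ nhds y := by
      refine Filter.mem_of_superset hnb ?_
      rintro _ ⟨x, hx, rfl⟩
      refine (hhk x ?_).1
      rcases hx with hx | hx
      · rw [hins] at hx; exact K.convexHull_subset_space hF hx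
      · exact K.convexHull_subset_space hbK hx
    rw [← mem_interior_iff_mem_nhds, interior_closedBall _ one_ne_zero] at hnb2
    simp [hy] at hnb2
  -- Baire
  set Sp : Set (ES d) := Metric.sphere 0 1 with hSp
  have hSpm : ∀ y, y ∈ Sp ↔ ‖y‖ = 1 := fun y => by simp [hSp]
  have hSpb : Sp ⊆ Metric.closedBall 0 1 := Metric.sphere_subset_closedBall
  have : CompactSpace Sp := isCompact_iff_compactSpace.1 (isCompact_sphere 0 1)
  have hnonE : Nonempty Sp := by
    have : Nontrivial (ES d) := by
      have : Nonempty (Fin d) := ⟨⟨0, hd⟩⟩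
      infer_instance
    exact (NormedSpace.sphere_nonempty.2 zero_le_one).to_subtype
  have hkc : Continuous fun y : Sp => k y := (hk.mono hSpb).domRestrict
  have hcount : Countable {ρ : Finset (ES N) // ρ ∈ K.faces ∧ ρ.card + 1 ≤ d} := by
    have hf : Set.Finite {ρ : Finset (ES N) | ρ ∈ K.faces ∧ ρ.card + 1 ≤ d} := hfin.subset fun ρ h => h.1
    exact hf.countable.to_subtype
  obtain ⟨⟨ρ, hρK, hρc⟩, hint⟩ := nonempty_interior_of_iUnion_of_closed
    (f := fun ρ : {ρ : Finset (ES N) // ρ ∈ K.faces ∧ ρ.card + 1 ≤ d} =>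
      {y : Sp | k y ∈ convexHull ℝ (ρ.1 : Set (ES N))})
    (fun ρ => IsClosed.preimage hkc (ρ.1.finite_toSet.isClosed_convexHull ℝ))
    (by
      rw [Set.eq_univ_iff_forall]
      intro y
      obtain ⟨ρ, h1, h2, h3⟩ := hsph y ((hSpm _).1 y.2)
      exact Set.mem_iUnion.2 ⟨⟨ρ, h1, h2⟩, h3⟩)
  obtain ⟨y0, hy0⟩ := hint
  rw [mem_interior_iff_mem_nhds, Metric.mem_nhds_iff] at hy0
  obtain ⟨r, hr, hry⟩ := hy0
  have hρ : ∀ y : ES d, ‖y‖ = 1 → dist y y0 < r → k y ∈ convexHull ℝ (ρ : Set (ES N)) := by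
    intro y hy hd
    exact hry (show (⟨y, (hSpm y).2 hy⟩ : Sp) ∈ Metric.ball y0 r from hd)
  obtain ⟨v0, hv0⟩ := K.nonempty_of_mem_faces hρK
  set M := vectorSpan ℝ (ρ : Set (ES N)) with hM
  have hMmem : ∀ x ∈ convexHull ℝ (ρ : Set (ES N)), x - v0 ∈ M := by
    intro x hx
    have := vsub_mem_vectorSpan_of_mem_affineSpan_of_mem_affineSpan
      (convexHull_subset_affineSpan _ hx) (subset_affineSpan ℝ _ (Finset.mem_coe.2 hv0))
    exact this
  have hMr : Module.finrank ℝ (M × ℝ) ≤ ρ.card := by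
    rw [Module.finrank_prod, Module.finrank_self]
    have := finrank_vectorSpan_image_finset_le ℝ (id : ES N → ES N) ρ (n := ρ.card - 1)
      (by have := Finset.card_pos.2 ⟨v0, hv0⟩; omega)
    rw [Finset.image_id] at this
    have h2 := Finset.card_pos.2 ⟨v0, hv0⟩
    have h3 : Module.finrank ℝ M ≤ ρ.card - 1 := this
    omega
  have hMd : Module.finrank ℝ (M × ℝ) < Module.finrank ℝ (ES d) := by
    rw [finrank_euclideanSpace_fin]; omega
  obtain ⟨J, hJ⟩ : ∃ J : (M × ℝ) →ₗ[ℝ] ES d, Function.Injective J := by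
    obtain ⟨f, hf⟩ := exists_linearIndependent_of_le_finrank hMd.le
    refine ⟨(Finsupp.linearCombination ℝ f).comp (Module.finBasis ℝ (M × ℝ)).repr.toLinearMap, ?_⟩
    rw [LinearMap.coe_comp]
    exact Function.Injective.comp (show Function.Injective (Finsupp.linearCombination ℝ f) from hf) (LinearEquiv.injective _)
  set ν : ES d → ES d := fun z => ‖z‖⁻¹ • z with hν
  have hy01 : ‖(y0 : ES d)‖ = 1 := (hSpm _).1 y0.2
  have hνn : ∀ z, z ≠ 0 → ‖ν z‖ = 1 := fun z hz => by
    simp only [hν]; rw [norm_smul, norm_inv, norm_norm, inv_mul_cancel₀ (norm_ne_zero_iff.2 hz)]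
  have hνc : ContinuousOn ν {z | z ≠ 0} := by
    refine ContinuousOn.smul (ContinuousOn.inv₀ (by fun_prop) fun z hz => norm_ne_zero_iff.2 hz) (by fun_prop)
  have hν0 : ν y0 = y0 := by simp [hν, hy01]
  have hy0ne : (y0 : ES d) ≠ 0 := by
    intro h; rw [h] at hy01; simp at hy01
  obtain ⟨s, hs, hsz⟩ : ∃ s > 0, ∀ z ∈ Metric.closedBall (y0 : ES d) s, z ≠ 0 ∧ dist (ν z) y0 < r := by
    have hca : ContinuousAt ν y0 := hνc.continuousAt (isOpen_ne.mem_nhds hy0ne)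
    have h1 : ∀ᶠ z in nhds (y0 : ES d), dist (ν z) y0 < r := by
      have := hca.eventually (Metric.ball_mem_nhds _ hr)
      rw [hν0] at this
      exact this
    have h2 : ∀ᶠ z in nhds (y0 : ES d), z ≠ 0 := isOpen_ne.mem_nhds hy0ne
    obtain ⟨s, hs, h3⟩ := Metric.nhds_basis_closedBall.eventually_iff.1 (h2.and h1)
    exact ⟨s, hs, fun z hz => h3 hz⟩
  have hkν : ∀ z ∈ Metric.closedBall (y0 : ES d) s, k (ν z) ∈ convexHull ℝ (ρ : Set (ES N)) :=
    fun z hz => hρ _ (hνn z (hsz z hz).1) (hsz z hz).2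
  have hνb : ∀ z ∈ Metric.closedBall (y0 : ES d) s, ν z ∈ Metric.closedBall (0 : ES d) 1 :=
    fun z hz => by simp [hνn z (hsz z hz).1]
  set ψ : ES d → M × ℝ := fun z =>
    (if hz : k (ν z) - v0 ∈ M then ⟨k (ν z) - v0, hz⟩ else 0, ‖z‖) with hψ
  have hψ1 : ∀ z ∈ Metric.closedBall (y0 : ES d) s, ((ψ z).1 : ES N) = k (ν z) - v0 := by
    intro z hz
    simp only [hψ, hMmem _ (hkν z hz), dif_pos]
  have hψc : ContinuousOn ψ (Metric.closedBall (y0 : ES d) s) := by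
    refine ContinuousOn.prodMk ?_ (by fun_prop)
    rw [Topology.IsInducing.subtypeVal.continuousOn_iff]
    refine ContinuousOn.congr (f := fun z => k (ν z) - v0) ?_ (fun z hz => hψ1 z hz)
    refine ContinuousOn.sub ?_ continuousOn_const
    exact hk.comp (hνc.mono fun z hz => (hsz z hz).1) hνb
  have hψi : Set.InjOn ψ (Metric.closedBall (y0 : ES d) s) := by
    intro z hz z' hz' he
    have h1 : k (ν z) = k (ν z') := by
      have := hψ1 z hz
      rw [he, hψ1 z' hz'] at this
      exact (sub_left_injective this).symm
    have h2 : ‖z‖ = ‖z'‖ := congrArg Prod.snd he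
    have h3 : ν z = ν z' := by
      rw [← (hkh _ (hνb z hz)).2, ← (hkh _ (hνb z' hz')).2, h1]
    simp only [hν, h2] at h3
    exact smul_right_injective _ (inv_ne_zero (norm_ne_zero_iff.2 (hsz z' hz').1)) h3
  have hiod := iod (fun z => J (ψ z)) y0 s hs
    ((LinearMap.continuous_of_finiteDimensional J).comp_continuousOn hψc)
    (hJ.comp_injOn hψi)
  have htop : LinearMap.range J = ⊤ := by
    apply Submodule.eq_top_of_nonempty_interior'
    refine ⟨_, mem_interior_iff_mem_nhds.2 (Filter.mem_of_superset hiod ?_)⟩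
    rintro _ ⟨z, _, rfl⟩
    exact ⟨_, rfl⟩
  have := LinearMap.finrank_range_le J
  rw [htop, finrank_top] at this
  omega

/-- The union of some, but not all, of the facets of a simplex is a ball. -/
theorem ball_of_facets {N d : ℕ} (hd : 1 ≤ d) (F A : Finset (ES N))
    (hF : AffineIndependent ℝ ((↑) : F → ES N)) (hcard : F.card = d + 1)
    (hA : A ⊆ F) (hAne : A.Nonempty) (hAF : A ≠ F) :
    Nonempty (↥(⋃ v ∈ F \ A, convexHull ℝ ((F.erase v : Finset (ES N)) : Set (ES N))) ≃ₜ
      ↥(Metric.closedBall (0 : ES (d-1)) 1)) := by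
  set C := F \ A with hC
  have hCF : C ⊆ F := Finset.sdiff_subset
  have hCne : C.Nonempty := by
    rw [hC, Finset.sdiff_nonempty]
    exact fun h => hAF (Finset.Subset.antisymm hA h)
  have hA0 : (0:ℝ) < A.card := by exact_mod_cast Finset.card_pos.2 hAne
  have hC0 : (0:ℝ) < C.card := by exact_mod_cast Finset.card_pos.2 hCne
  set X := ⋃ v ∈ C, convexHull ℝ ((F.erase v : Finset (ES N)) : Set (ES N)) with hX
  -- direction weights
  set w : ES N →₀ ℝ := (∑ v ∈ C, Finsupp.single v (C.card : ℝ)⁻¹) - ∑ v ∈ A, Finsupp.single v (A.card : ℝ)⁻¹ with hw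
  have hwv : ∀ v, w v = (if v ∈ C then (C.card : ℝ)⁻¹ else 0) - (if v ∈ A then (A.card : ℝ)⁻¹ else 0) := by
    intro v
    simp only [hw, Finsupp.sub_apply, Finsupp.finsetSum_apply, Finsupp.single_apply]
    rw [Finset.sum_ite_eq' C v (fun _ => (C.card:ℝ)⁻¹), Finset.sum_ite_eq' A v (fun _ => (A.card:ℝ)⁻¹)]
  have hCA : ∀ v, v ∈ C → v ∉ A := fun v hv => (Finset.mem_sdiff.1 hv).2
  have hwC : ∀ v ∈ C, w v = (C.card : ℝ)⁻¹ := fun v hv => by simp [hwv, hv, hCA v hv]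
  have hwA : ∀ v ∈ A, w v = -(A.card : ℝ)⁻¹ := fun v hv => by
    simp [hwv, hv, show v ∉ C from fun h => hCA v h hv]
  have hwo : ∀ v, v ∉ F → w v = 0 := fun v hv => by
    simp [hwv, show v ∉ C from fun h => hv (hCF h), show v ∉ A from fun h => hv (hA h)]
  have hwt : tot w = 0 := by
    simp [hw, tot, map_sum, Finsupp.linearCombination_single, hA0.ne', hC0.ne']
  set e : ES N := pt w with he
  set M := vectorSpan ℝ (F : Set (ES N)) with hM
  have hptadd : ∀ (U : ES N →₀ ℝ) (t : ℝ), pt (U + t • w) = pt U + t • e := by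
    intro U t; simp [pt, he]
  have htotadd : ∀ (U : ES N →₀ ℝ) (t : ℝ), tot (U + t • w) = tot U := by
    intro U t
    have : tot (U + t • w) = tot U + t * tot w := by simp [tot]
    rw [this, hwt]; ring
  have hMr : Module.finrank ℝ M = d := by
    have := hF.finrank_vectorSpan (n := d) (by simpa using hcard)
    rw [Subtype.range_coe_subtype] at this
    exact this
  -- membership in X
  have hXmem : ∀ x, x ∈ X ↔ ∃ U, IsW F U ∧ (∃ v ∈ C, U v = 0) ∧ pt U = x := by
    intro x
    simp only [hX, Set.mem_iUnion, exists_prop]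
    constructor
    · rintro ⟨v, hv, hx⟩
      obtain ⟨U, hU, rfl⟩ := mem_hull.1 hx
      exact ⟨U, ⟨fun z hz => hU.supp z (fun h => hz (Finset.mem_of_mem_erase h)), hU.nonneg, hU.tot1⟩,
        ⟨v, hv, hU.supp v (by simp)⟩, rfl⟩
    · rintro ⟨U, hU, ⟨v, hv, hUv⟩, rfl⟩
      refine ⟨v, hv, mem_hull.2 ⟨U, ⟨fun z hz => ?_, hU.nonneg, hU.tot1⟩, rfl⟩⟩
      by_cases hzv : z = v
      · rw [hzv, hUv]
      · exact hU.supp z (fun h => hz (Finset.mem_erase.2 ⟨hzv, h⟩))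
  obtain ⟨a0, ha0⟩ := hAne
  obtain ⟨c0, hc0⟩ := hCne
  -- e ∈ M, e ≠ 0
  have hdiffM : ∀ U V, IsW F U → IsW F V → pt U - pt V ∈ M := by
    intro U V hU hV
    exact vsub_mem_vectorSpan_of_mem_affineSpan_of_mem_affineSpan
      (convexHull_subset_affineSpan _ (mem_hull.2 ⟨U, hU, rfl⟩))
      (convexHull_subset_affineSpan _ (mem_hull.2 ⟨V, hV, rfl⟩))
  have hne : e ≠ 0 := by
    intro h0
    have := weights_unique_aux hF (W := w) (W' := 0) hwo (by simp) (by rw [hwt]; simp [tot])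
      (by rw [← he, h0]; simp [pt])
    have h1 := hwC c0 hc0
    rw [this] at h1
    simp at h1
    exact hC0.ne h1
  have heM : e ∈ M := by
    set U : ES N →₀ ℝ := ∑ v ∈ A, Finsupp.single v (A.card : ℝ)⁻¹ with hU
    set V : ES N →₀ ℝ := ∑ v ∈ C, Finsupp.single v (C.card : ℝ)⁻¹ with hV
    have hUv : ∀ v, U v = if v ∈ A then (A.card:ℝ)⁻¹ else 0 := fun v => by
      simp only [hU, Finsupp.finsetSum_apply, Finsupp.single_apply]
      rw [Finset.sum_ite_eq' A v (fun _ => (A.card:ℝ)⁻¹)]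
    have hVv : ∀ v, V v = if v ∈ C then (C.card:ℝ)⁻¹ else 0 := fun v => by
      simp only [hV, Finsupp.finsetSum_apply, Finsupp.single_apply]
      rw [Finset.sum_ite_eq' C v (fun _ => (C.card:ℝ)⁻¹)]
    have h1 : e = pt V - pt U := by simp [he, hw, pt, hU, hV]
    rw [h1]
    refine hdiffM _ _ ⟨fun v hv => ?_, fun v => ?_, ?_⟩ ⟨fun v hv => ?_, fun v => ?_, ?_⟩
    · rw [hVv, if_neg (fun h => hv (hCF h))]
    · rw [hVv]; split_ifs <;> positivity
    · simp [hV, tot, map_sum, Finsupp.linearCombination_single, hC0.ne']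
    · rw [hUv, if_neg (fun h => hv (hA h))]
    · rw [hUv]; split_ifs <;> positivity
    · simp [hU, tot, map_sum, Finsupp.linearCombination_single, hA0.ne']
  -- projection
  obtain ⟨P, hPsurj, hPker⟩ : ∃ P : ES N →ₗ[ℝ] ES (d-1), (∀ y, ∃ m ∈ M, P m = y) ∧
      ∀ m ∈ M, P m = 0 ↔ ∃ t : ℝ, m = t • e := by
    set e' : M := ⟨e, heM⟩ with he'
    have he'0 : e' ≠ 0 := fun h => hne (congrArg Subtype.val h)
    have hfr : Module.finrank ℝ (M ⧸ (Submodule.span ℝ {e'})) = Module.finrank ℝ (ES (d-1)) := by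
      have h1 := Submodule.finrank_quotient_add_finrank (Submodule.span ℝ {e'})
      rw [finrank_span_singleton he'0, hMr] at h1
      rw [finrank_euclideanSpace_fin]; omega
    obtain ⟨L⟩ := FiniteDimensional.nonempty_linearEquiv_of_finrank_eq hfr
    obtain ⟨P, hP⟩ := LinearMap.exists_extend (p := M) (L.toLinearMap.comp (Submodule.mkQ (Submodule.span ℝ {e'})))
    have hPm : ∀ m : M, P m = L (Submodule.Quotient.mk m) := fun m => by
      have := congrArg (fun f => f m) hP
      exact this
    refine ⟨P, fun y => ?_, fun m hm => ?_⟩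
    · obtain ⟨q, hq⟩ := L.surjective y
      obtain ⟨m, rfl⟩ := Submodule.Quotient.mk_surjective _ q
      exact ⟨m, m.2, by rw [hPm, hq]⟩
    · have := hPm ⟨m, hm⟩
      simp only at this
      rw [this, LinearEquiv.map_eq_zero_iff, Submodule.Quotient.mk_eq_zero, Submodule.mem_span_singleton]
      constructor
      · rintro ⟨t, ht⟩
        exact ⟨t, (congrArg Subtype.val ht).symm⟩
      · rintro ⟨t, ht⟩
        exact ⟨t, Subtype.ext ht.symm⟩
  have hPc : Continuous P := LinearMap.continuous_of_finiteDimensional P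
  have hPe : P e = 0 := (hPker e heM).2 ⟨1, by simp⟩
  set Δ := convexHull ℝ (F : Set (ES N)) with hΔ
  have hXcpt : IsCompact X := by
    rw [hX]
    exact C.isCompact_biUnion fun v _ => (Finset.finite_toSet _).isCompact_convexHull ℝ
  have hXΔ : X ⊆ Δ := by
    intro x hx
    obtain ⟨U, hU, -, rfl⟩ := (hXmem x).1 hx
    exact mem_hull.2 ⟨U, hU, rfl⟩
  have hinj : Set.InjOn P X := by
    have key : ∀ U V, IsW F U → IsW F V → (∃ v ∈ C, U v = 0) → ∀ t : ℝ, U = V + t • w → t ≤ 0 := by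
      rintro U V hU hV ⟨v, hv, hUv⟩ t h
      have h1 : U v = V v + t * (C.card:ℝ)⁻¹ := by
        rw [h, Finsupp.add_apply, Finsupp.smul_apply, smul_eq_mul, hwC v hv]
      have h2 := hV.nonneg v
      have h3 : t * (C.card:ℝ)⁻¹ ≤ 0 := by linarith
      by_contra! ht
      have : 0 < t * (C.card:ℝ)⁻¹ := mul_pos ht (inv_pos.2 hC0)
      linarith
    intro x hx y hy hxy
    obtain ⟨U, hU, hU0, rfl⟩ := (hXmem x).1 hx
    obtain ⟨V, hV, hV0, rfl⟩ := (hXmem y).1 hy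
    obtain ⟨t, ht⟩ := (hPker _ (hdiffM U V hU hV)).1 (by rw [map_sub, hxy, sub_self])
    have hUV : U = V + t • w := by
      refine weights_unique_aux hF hU.supp (fun v hv => by
        rw [Finsupp.add_apply, Finsupp.smul_apply, smul_eq_mul, hV.supp v hv, hwo v hv, mul_zero, add_zero]) ?_ ?_
      · rw [htotadd, hU.tot1, hV.tot1]
      · rw [hptadd, ← ht]; abel
    have h1 := key U V hU hV hU0 t hUV
    have h2 := key V U hV hU hV0 (-t) (by rw [hUV]; module)
    have : t = 0 := by linarith
    rw [hUV, this]; simp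
  have himg : P '' X = P '' Δ := by
    apply Set.Subset.antisymm (Set.image_mono hXΔ)
    rintro _ ⟨x, hx, rfl⟩
    obtain ⟨U, hU, rfl⟩ := mem_hull.1 hx
    obtain ⟨v1, hv1, hmin⟩ := Finset.exists_min_image C U ⟨c0, hc0⟩
    set t : ℝ := -(C.card * U v1) with ht
    have ht0 : t ≤ 0 := by
      have := hU.nonneg v1
      have : 0 ≤ C.card * U v1 := mul_nonneg hC0.le this
      linarith
    have hVC : ∀ v ∈ C, (U + t • w) v = U v - U v1 := by
      intro v hv
      simp only [Finsupp.add_apply, Finsupp.smul_apply, smul_eq_mul, hwC v hv, ht]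
      have h5 : (C.card:ℝ) * (C.card:ℝ)⁻¹ = 1 := mul_inv_cancel₀ hC0.ne'
      linear_combination (-U v1) * h5
    refine ⟨pt (U + t • w), (hXmem _).2 ⟨_, ⟨fun v hv => ?_, fun v => ?_, ?_⟩, ⟨v1, hv1, ?_⟩, rfl⟩, ?_⟩
    · rw [Finsupp.add_apply, Finsupp.smul_apply, smul_eq_mul, hU.supp v hv, hwo v hv, mul_zero, add_zero]
    · by_cases hv : v ∈ C
      · rw [hVC v hv]; linarith [hmin v hv]
      · by_cases hvA : v ∈ A
        · simp only [Finsupp.add_apply, Finsupp.smul_apply, smul_eq_mul, hwA v hvA]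
          have := hU.nonneg v
          have : 0 ≤ (A.card:ℝ)⁻¹ := inv_nonneg.2 hA0.le
          nlinarith
        · have hvF : v ∉ F := fun h => hv (Finset.mem_sdiff.2 ⟨h, hvA⟩)
          rw [Finsupp.add_apply, Finsupp.smul_apply, smul_eq_mul, hU.supp v hvF, hwo v hvF, mul_zero, add_zero]
    · rw [htotadd, hU.tot1]
    · rw [hVC v1 hv1, sub_self]
    · rw [hptadd, map_add, map_smul, hPe]; simp
  have hQ : P '' Δ = convexHull ℝ (P '' (F : Set (ES N))) := P.image_convexHull _
  have hQconv : Convex ℝ (P '' Δ) := by rw [hQ]; exact convex_convexHull _ _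
  have hQint : (interior (P '' Δ)).Nonempty := by
    rw [hQ, interior_convexHull_nonempty_iff_affineSpan_eq_top]
    have hnon : (P '' (F : Set (ES N))).Nonempty := ⟨_, a0, hA ha0, rfl⟩
    rw [AffineSubspace.affineSpan_eq_top_iff_vectorSpan_eq_top_of_nonempty _ _ _ hnon]
    have h1 : vectorSpan ℝ (P '' (F : Set (ES N))) = M.map P := by
      have := P.toAffineMap.map_vectorSpan (s := (F : Set (ES N)))
      simpa using this.symm
    rw [h1, eq_top_iff]
    intro y _
    obtain ⟨m, hm, hy⟩ := hPsurj y
    exact ⟨m, hm, hy⟩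
  have hQcpt : IsCompact (P '' Δ) := by
    rw [← himg]; exact hXcpt.image hPc
  obtain ⟨H, -, hH, -⟩ := exists_homeomorph_image_interior_closure_frontier_eq_unitBall hQconv hQint hQcpt.isBounded
  rw [hQcpt.isClosed.closure_eq] at hH
  have : CompactSpace X := isCompact_iff_compactSpace.1 hXcpt
  have hemb : Topology.IsEmbedding (X.domRestrict P) :=
    ((hPc.continuousOn.domRestrict).isClosedEmbedding (Set.injOn_iff_injective.1 hinj)).isEmbedding
  have e1 : X ≃ₜ Set.range (X.domRestrict P) := hemb.toHomeomorph
  have hrange : Set.range (X.domRestrict P) = P '' Δ := by rw [Set.range_domRestrict, himg]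
  have e2 : Set.range (X.domRestrict P) ≃ₜ (P '' Δ) := Homeomorph.setCongr hrange
  have e3 : (P '' Δ) ≃ₜ (H '' (P '' Δ)) := H.image _
  exact ⟨(e1.trans e2).trans (e3.trans (Homeomorph.setCongr hH))⟩

/-- Recursive form of the shelling condition. -/
def Sh {W : Type*} (d : ℕ) : List (Finset W) → Prop
  | [] => True
  | F :: L => (F.card = d + 1 ∧ ∃ A ⊆ F, ∀ σ ⊆ F, (∃ G ∈ L, σ ⊆ G) ↔ ¬ A ⊆ σ) ∧ Sh d L

/-- Parity of the number of elements of `z` with property `p`. -/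
noncomputable def cnt {α : Type*} (p : α → Prop) (z : Finset α) : ZMod 2 := ((z.filter p).card : ZMod 2)

theorem cnt_eq {α : Type*} (p : α → Prop) [DecidablePred p] (z : Finset α) :
    cnt p z = ((z.filter p).card : ZMod 2) := by
  unfold cnt; congr!

theorem cnt_symmDiff {α : Type*} [DecidableEq α] (p : α → Prop) (z w : Finset α) :
    cnt p (symmDiff z w) = cnt p z + cnt p w := by
  have h : ∀ s : Finset α, cnt p s = ∑ x ∈ s ∪ (z ∪ w), if x ∈ s ∧ p x then (1 : ZMod 2) else 0 := by
    intro s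
    rw [cnt, Finset.card_filter, Nat.cast_sum, ← Finset.sum_subset (Finset.subset_union_left (s₁ := s))]
    · refine Finset.sum_congr rfl fun x hx => ?_
      simp [hx]
    · intro x _ hx; simp [hx]
  have e1 : symmDiff z w ∪ (z ∪ w) = z ∪ w := by
    ext x; simp only [Finset.mem_union, Finset.mem_symmDiff]; tauto
  have e2 : z ∪ (z ∪ w) = z ∪ w := by
    ext x; simp only [Finset.mem_union]; tauto
  have e3 : w ∪ (z ∪ w) = z ∪ w := by
    ext x; simp only [Finset.mem_union]; tauto
  rw [h, h z, h w, e1, e2, e3, ← Finset.sum_add_distrib]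
  refine Finset.sum_congr rfl fun x _ => ?_
  simp only [Finset.mem_symmDiff]
  have h2 : (1 : ZMod 2) + 1 = 0 := rfl
  by_cases h1 : x ∈ z <;> by_cases h3 : x ∈ w <;> by_cases h4 : p x <;> simp [h1, h3, h4, h2]

theorem cnt_insert {α : Type*} [DecidableEq α] (p : α → Prop) [DecidablePred p] (z : Finset α) (a : α) (ha : a ∉ z) :
    cnt p (insert a z) = (if p a then 1 else 0) + cnt p z := by
  rw [cnt_eq, cnt_eq]
  rw [Finset.filter_insert]
  split_ifs with h
  · rw [Finset.card_insert_of_notMem (by simp [ha])]; push_cast; ring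
  · simp

/-- The boundary of `F` in the star of `τ`. -/
noncomputable def bF {W : Type*} (F τ : Finset W) : Finset (Finset W) := (F \ τ).image (fun v => F.erase v)

theorem mem_bF {W : Type*} {d : ℕ} {F τ σ : Finset W} (hF : F.card = d + 1) (hτ : τ ⊆ F) :
    σ ∈ bF F τ ↔ σ ⊆ F ∧ σ.card = d ∧ τ ⊆ σ := by
  simp only [bF, Finset.mem_image, Finset.mem_sdiff]
  constructor
  · rintro ⟨v, ⟨hv, hvτ⟩, rfl⟩
    refine ⟨Finset.erase_subset _ _, by rw [Finset.card_erase_of_mem hv]; omega, fun x hx => ?_⟩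
    exact Finset.mem_erase.2 ⟨fun h => hvτ (h ▸ hx), hτ hx⟩
  · rintro ⟨h1, h2, h3⟩
    have hc : (F \ σ).card = 1 := by rw [Finset.card_sdiff_of_subset h1]; omega
    obtain ⟨v, hv⟩ := Finset.card_eq_one.1 hc
    have hvm : v ∈ F \ σ := by rw [hv]; simp
    rw [Finset.mem_sdiff] at hvm
    refine ⟨v, ⟨hvm.1, fun h => hvm.2 (h3 h)⟩, ?_⟩
    rw [Finset.erase_eq, ← hv, Finset.sdiff_sdiff_eq_self h1]

theorem cnt_bF {W : Type*} {d : ℕ} {F τ ρ : Finset W} (hF : F.card = d + 1) (hτ : τ ⊆ ρ)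
    (hρ : ρ.card + 1 = d) : cnt (fun σ => ρ ⊆ σ) (bF F τ) = 0 := by
  rw [cnt_eq]
  by_cases h : ρ ⊆ F
  · have : (bF F τ).filter (fun σ => ρ ⊆ σ) = (F \ ρ).image (fun v => F.erase v) := by
      ext σ
      rw [Finset.mem_filter, mem_bF hF (hτ.trans h)]
      change _ ↔ σ ∈ bF F ρ
      rw [mem_bF hF h]
      exact ⟨fun h => ⟨h.1.1, h.1.2.1, h.2⟩, fun h => ⟨⟨h.1, h.2.1, hτ.trans h.2.2⟩, h.2.2⟩⟩
    rw [this, Finset.card_image_of_injOn, Finset.card_sdiff_of_subset h]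
    · have : F.card - ρ.card = 2 := by omega
      rw [this]; rfl
    · intro x hx y hy hxy
      have hx' : x ∈ F := (Finset.mem_sdiff.1 hx).1
      by_contra hne
      have : x ∈ F.erase y := Finset.mem_erase.2 ⟨hne, hx'⟩
      have h2 : F.erase x = F.erase y := hxy
      rw [← h2] at this
      exact Finset.notMem_erase _ _ this
  · rw [Finset.filter_eq_empty_iff.2]
    · simp
    · intro σ hσ hρσ
      simp only [bF, Finset.mem_image] at hσ
      obtain ⟨v, -, rfl⟩ := hσ
      exact h (hρσ.trans (Finset.erase_subset _ _))

theorem cycle_lemma {W : Type*} {d : ℕ} (L : List (Finset W)) (hL : Sh d L) (τ : Finset W) :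
    ∀ z : Finset (Finset W), (∀ σ ∈ z, σ.card = d ∧ τ ⊆ σ ∧ ∃ G ∈ L, σ ⊆ G) →
      (∀ ρ : Finset W, τ ⊆ ρ → ρ.card + 1 = d → cnt (fun σ => ρ ⊆ σ) z = 0) →
      ∃ c : Finset (Finset W), (∀ G ∈ c, G ∈ L ∧ τ ⊆ G) ∧
        ∀ σ, τ ⊆ σ → σ.card = d → (if σ ∈ z then 1 else 0) = cnt (fun G => σ ⊆ G) c := by
  induction L with
  | nil =>
    intro z hz _
    refine ⟨∅, by simp, fun σ _ _ => ?_⟩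
    have : σ ∉ z := fun h => by obtain ⟨_, _, G, hG, _⟩ := hz σ h; simp at hG
    simp [this, cnt]
  | cons F L ih =>
    obtain ⟨⟨hF, A, hA, hs⟩, hL'⟩ := hL
    intro z hz hcyc
    have hFL : F ∉ L := fun h => (hs F subset_rfl).1 ⟨F, h, subset_rfl⟩ hA
    have fin : ∀ z : Finset (Finset W), (∀ σ ∈ z, σ.card = d ∧ τ ⊆ σ ∧ ∃ G ∈ L, σ ⊆ G) →
      (∀ ρ : Finset W, τ ⊆ ρ → ρ.card + 1 = d → cnt (fun σ => ρ ⊆ σ) z = 0) → 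
      ∃ c : Finset (Finset W), (∀ G ∈ c, G ∈ L ∧ τ ⊆ G) ∧
        ∀ σ, τ ⊆ σ → σ.card = d → (if σ ∈ z then 1 else 0) = cnt (fun G => σ ⊆ G) c := ih hL'
    by_cases hcase : ∃ v0 ∈ F \ A, v0 ∉ τ ∧ τ ⊆ F ∧ F.erase v0 ∈ z
    · obtain ⟨v0, hv0, hv0τ, hτF, hv0z⟩ := hcase
      rw [Finset.mem_sdiff] at hv0
      have hall : ∀ v ∈ F, v ∉ A → v ∉ τ → F.erase v ∈ z := by
        intro v hv hvA hvτ
        by_contra hvz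
        have hne : v ≠ v0 := by rintro rfl; exact hvz hv0z
        set ρ := (F.erase v0).erase v with hρ
        have hvm : v ∈ F.erase v0 := Finset.mem_erase.2 ⟨hne, hv⟩
        have hρc : ρ.card + 1 = d := by
          rw [hρ, Finset.card_erase_add_one hvm, Finset.card_erase_of_mem hv0.1]; omega
        have hτρ : τ ⊆ ρ := fun x hx => by
          simp only [hρ, Finset.mem_erase]
          exact ⟨fun h => hvτ (h ▸ hx), fun h => hv0τ (h ▸ hx), hτF hx⟩
        have hAρ : A ⊆ ρ := fun x hx => by
          simp only [hρ, Finset.mem_erase]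
          exact ⟨fun h => hvA (h ▸ hx), fun h => hv0.2 (h ▸ hx), hA hx⟩
        have hρF : ρ ⊆ F := (Finset.erase_subset _ _).trans (Finset.erase_subset _ _)
        have h0 := hcyc ρ hτρ hρc
        have hfil : z.filter (fun σ => ρ ⊆ σ) = {F.erase v0} := by
          ext σ
          rw [Finset.mem_filter, Finset.mem_singleton]
          constructor
          · rintro ⟨hσz, hρσ⟩
            obtain ⟨hσc, hτσ, G, hG, hσG⟩ := hz σ hσz
            have hGF : G = F := by
              rcases List.mem_cons.1 hG with h | h
              · exact h
              · exact absurd hAρ ((hs ρ hρF).1 ⟨G, h, hρσ.trans hσG⟩)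
            subst hGF
            have hm := (mem_bF hF hρF).2 ⟨hσG, hσc, hρσ⟩
            simp only [bF, Finset.mem_image, Finset.mem_sdiff] at hm
            obtain ⟨u, ⟨huF, huρ⟩, rfl⟩ := hm
            simp only [hρ, Finset.mem_erase, not_and] at huρ
            by_cases huv : u = v
            · subst huv; exact absurd hσz hvz
            · by_cases huv0 : u = v0
              · rw [huv0]
              · exact absurd huF (huρ huv huv0)
          · rintro rfl
            exact ⟨hv0z, Finset.erase_subset _ _⟩
        rw [cnt_eq, hfil] at h0
        simp at h0
      obtain ⟨c, hc, hcσ⟩ := fin (symmDiff z (bF F τ)) (by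
        intro σ hσ
        rcases Finset.mem_symmDiff.1 hσ with ⟨h1, h2⟩ | ⟨h1, h2⟩
        · obtain ⟨hσc, hτσ, G, hG, hσG⟩ := hz σ h1
          refine ⟨hσc, hτσ, ?_⟩
          rcases List.mem_cons.1 hG with h | h
          · exact absurd ((mem_bF hF hτF).2 ⟨h ▸ hσG, hσc, hτσ⟩) h2
          · exact ⟨G, h, hσG⟩
        · obtain ⟨hσF, hσc, hτσ⟩ := (mem_bF hF hτF).1 h1
          refine ⟨hσc, hτσ, (hs σ hσF).2 fun hAσ => h2 ?_⟩
          simp only [bF, Finset.mem_image, Finset.mem_sdiff] at h1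
          obtain ⟨v, ⟨hv, hvτ⟩, rfl⟩ := h1
          exact hall v hv (fun h => Finset.notMem_erase _ _ (hAσ h)) hvτ) (by
        intro ρ hτρ hρc
        rw [cnt_symmDiff, hcyc ρ hτρ hρc, cnt_bF hF hτρ hρc, add_zero])
      refine ⟨insert F c, ?_, ?_⟩
      · intro G hG
        rcases Finset.mem_insert.1 hG with rfl | h
        · exact ⟨List.mem_cons_self, hτF⟩
        · exact ⟨List.mem_cons_of_mem _ (hc G h).1, (hc G h).2⟩
      · intro σ hτσ hσc
        rw [cnt_insert _ _ _ (fun h => hFL (hc F h).1), ← hcσ σ hτσ hσc]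
        have : σ ∈ bF F τ ↔ σ ⊆ F := by
          rw [mem_bF hF hτF]; exact ⟨fun h => h.1, fun h => ⟨h, hσc, hτσ⟩⟩
        simp only [Finset.mem_symmDiff, this]
        have h2 : (1 : ZMod 2) + 1 = 0 := rfl
        by_cases h1 : σ ∈ z <;> by_cases h3 : σ ⊆ F <;> simp [h1, h3, h2]
    · obtain ⟨c, hc, hcσ⟩ := fin z (by
        intro σ hσ
        obtain ⟨hσc, hτσ, G, hG, hσG⟩ := hz σ hσ
        refine ⟨hσc, hτσ, ?_⟩
        rcases List.mem_cons.1 hG with h | h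
        · subst h
          have hτF := hτσ.trans hσG
          refine (hs σ hσG).2 fun hAσ => hcase ?_
          have h1 := (mem_bF hF hτF).2 ⟨hσG, hσc, hτσ⟩
          simp only [bF, Finset.mem_image, Finset.mem_sdiff] at h1
          obtain ⟨v, ⟨hv, hvτ⟩, rfl⟩ := h1
          exact ⟨v, Finset.mem_sdiff.2 ⟨hv, fun h => Finset.notMem_erase _ _ (hAσ h)⟩, hvτ, hτF, hσ⟩
        · exact ⟨G, h, hσG⟩) hcyc
      exact ⟨c, fun G hG => ⟨List.mem_cons_of_mem _ (hc G hG).1, (hc G hG).2⟩, hcσ⟩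

theorem conn_lemma {W : Type*} {d : ℕ} (L : List (Finset W)) (hL : Sh d L) (τ : Finset W)
    (S : Set (Finset W)) 
    (hcl : ∀ G ∈ L, ∀ G' ∈ L, ∀ σ : Finset W, σ.card = d → τ ⊆ σ → σ ⊆ G → σ ⊆ G' → G ∈ S → G' ∈ S)
    (hne : ∃ G ∈ L, τ ⊆ G ∧ G ∈ S) : ∀ G ∈ L, τ ⊆ G → G ∈ S := by
  induction L with
  | nil => simp
  | cons F L ih =>
    obtain ⟨⟨hF, A, hA, hs⟩, hL'⟩ := hL
    have ih' := ih hL' (fun G hG G' hG' => hcl G (List.mem_cons_of_mem _ hG) G' (List.mem_cons_of_mem _ hG'))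
    by_cases hτF : τ ⊆ F
    · by_cases hτL : ∃ G ∈ L, τ ⊆ G
      · have := (hs τ hτF).1 hτL
        obtain ⟨a, haA, haτ⟩ := Finset.not_subset.1 this
        have hτa : τ ⊆ F.erase a := fun x hx => Finset.mem_erase.2 ⟨fun h => haτ (h ▸ hx), hτF hx⟩
        obtain ⟨G1, hG1, haG1⟩ := (hs (F.erase a) (Finset.erase_subset _ _)).2
          (fun h => Finset.notMem_erase _ _ (h haA))
        have hac : (F.erase a).card = d := by rw [Finset.card_erase_of_mem (hA haA)]; omega
        have hallL : ∀ G ∈ L, τ ⊆ G → G ∈ S := by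
          apply ih'
          obtain ⟨G, hG, hτG, hGS⟩ := hne
          rcases List.mem_cons.1 hG with rfl | h
          · exact ⟨G1, hG1, hτa.trans haG1, hcl G hG G1 (List.mem_cons_of_mem _ hG1) _ hac hτa
              (Finset.erase_subset _ _) haG1 hGS⟩
          · exact ⟨G, h, hτG, hGS⟩
        intro G hG hτG
        rcases List.mem_cons.1 hG with rfl | h
        · exact hcl G1 (List.mem_cons_of_mem _ hG1) G hG _ hac hτa haG1
              (Finset.erase_subset _ _) (hallL G1 hG1 (hτa.trans haG1))
        · exact hallL G h hτG
      · intro G hG hτG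
        obtain ⟨G', hG', hτG', hGS'⟩ := hne
        rcases List.mem_cons.1 hG with rfl | h
        · rcases List.mem_cons.1 hG' with rfl | h'
          · exact hGS'
          · exact absurd ⟨G', h', hτG'⟩ hτL
        · exact absurd ⟨G, h, hτG⟩ hτL
    · obtain ⟨G', hG', hτG', hGS'⟩ := hne
      rcases List.mem_cons.1 hG' with rfl | h'
      · exact absurd hτG' hτF
      · intro G hG hτG
        rcases List.mem_cons.1 hG with rfl | h
        · exact absurd hτG hτF
        · exact ih' ⟨G', h', hτG', hGS'⟩ G h hτG

theorem star_closed {W : Type*} {d : ℕ} (F : Finset W) (L : List (Finset W)) (hF : F.card = d + 1)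
    (A : Finset W) (hA : A ⊆ F) (hs : ∀ σ ⊆ F, (∃ G ∈ L, σ ⊆ G) ↔ ¬ A ⊆ σ) (hL : Sh d L)
    (T1 : ∀ σ : Finset W, σ.card = d → ∀ G1 ∈ F :: L, ∀ G2 ∈ F :: L, ∀ G3 ∈ F :: L, σ ⊆ G1 → σ ⊆ G2 →
      σ ⊆ G3 → G1 = G2 ∨ G1 = G3 ∨ G2 = G3) :
    ∀ σ : Finset W, σ.card = d → F \ A ⊆ σ → ∀ G ∈ F :: L, σ ⊆ G → ∃ G' ∈ F :: L, G' ≠ G ∧ σ ⊆ G' := by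
  have hFL : F ∉ L := fun h => (hs F subset_rfl).1 ⟨F, h, subset_rfl⟩ hA
  set τ := F \ A with hτ
  have hτF : τ ⊆ F := Finset.sdiff_subset
  obtain ⟨c, hc, hcσ⟩ := cycle_lemma L hL τ (bF F τ) (by
    intro σ hσ
    obtain ⟨h1, h2, h3⟩ := (mem_bF hF hτF).1 hσ
    refine ⟨h2, h3, (hs σ h1).2 fun h => ?_⟩
    have : F ⊆ σ := fun x hx => by
      by_cases hxA : x ∈ A
      · exact h hxA
      · exact h3 (Finset.mem_sdiff.2 ⟨hx, hxA⟩)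
    have := Finset.card_le_card this
    omega) (fun ρ h1 h2 => cnt_bF hF h1 h2)
  have hc' : ∀ G ∈ insert F c, G ∈ F :: L := by
    intro G hG
    rcases Finset.mem_insert.1 hG with rfl | h
    · exact List.mem_cons_self
    · exact List.mem_cons_of_mem _ (hc G h).1
  have heven : ∀ σ : Finset W, σ.card = d → τ ⊆ σ → cnt (fun G => σ ⊆ G) (insert F c) = 0 := by
    intro σ hσc hτσ
    rw [cnt_insert _ _ _ (fun h => hFL (hc F h).1), ← hcσ σ hτσ hσc]
    have : σ ∈ bF F τ ↔ σ ⊆ F := by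
      rw [mem_bF hF hτF]; exact ⟨fun h => h.1, fun h => ⟨h, hσc, hτσ⟩⟩
    have h2 : (1 : ZMod 2) + 1 = 0 := rfl
    by_cases h3 : σ ⊆ F <;> simp [this, h3, h2]
  have hpartner : ∀ σ : Finset W, σ.card = d → τ ⊆ σ → ∀ G ∈ insert F c, σ ⊆ G →
      ∃ G' ∈ insert F c, G' ≠ G ∧ σ ⊆ G' := by
    intro σ hσc hτσ G hG hσG
    by_contra! hno
    have h0 := heven σ hσc hτσ
    have : (insert F c).filter (fun G => σ ⊆ G) = {G} := by
      ext G'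
      rw [Finset.mem_filter, Finset.mem_singleton]
      constructor
      · rintro ⟨h1, h2⟩
        by_contra h3
        exact hno G' h1 h3 h2
      · rintro rfl; exact ⟨hG, hσG⟩
    rw [cnt_eq, this] at h0
    simp at h0
  have hall := conn_lemma (F :: L) ⟨⟨hF, A, hA, hs⟩, hL⟩ τ {G | G ∈ insert F c} (by
    intro G hG G' hG' σ hσc hτσ hσG hσG' hGc
    obtain ⟨G2, hG2, hne, hσG2⟩ := hpartner σ hσc hτσ G hGc hσG
    rcases T1 σ hσc G hG G' hG' G2 (hc' G2 hG2) hσG hσG' hσG2 with h | h | h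
    · exact h ▸ hGc
    · exact absurd h.symm hne
    · rw [h]; exact hG2) ⟨F, List.mem_cons_self, hτF, Finset.mem_insert_self _ _⟩
  intro σ hσc hτσ G hG hσG
  obtain ⟨G', h1, h2, h3⟩ := hpartner σ hσc hτσ G (hall G hG (hτσ.trans hσG)) hσG
  exact ⟨G', hc' G' h1, h2, h3⟩
theorem exists_facet {W : Type*} {K : Set (Finset W)} (hK : K.Finite) {σ : Finset W} (hσ : σ ∈ K) :
    ∃ μ, IsFacet K μ ∧ σ ⊆ μ := by
  obtain ⟨μ, h1, h2⟩ := hK.exists_le_maximal hσ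
  exact ⟨μ, ⟨h2.1, fun τ hτ h => Finset.Subset.antisymm h (h2.2 hτ h)⟩, h1⟩

theorem sh_of {W : Type*} {d : ℕ} (l : List (Finset W))
    (h : ∀ k (hk : k < l.length), (l[k].card = d + 1 ∧ ∃ A ⊆ l[k], ∀ σ ⊆ l[k],
      (∃ G ∈ l.drop (k+1), σ ⊆ G) ↔ ¬ A ⊆ σ)) : Sh d l := by
  induction l with
  | nil => trivial
  | cons F L ih =>
    refine ⟨?_, ih fun k hk => ?_⟩
    · have := h 0 (by simp)
      simpa using this
    · have := h (k+1) (by simpa using hk)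
      simpa using this

theorem sh_drop {W : Type*} {d : ℕ} (l : List (Finset W)) (h : Sh d l) (k : ℕ) : Sh d (l.drop k) := by
  induction k generalizing l with
  | zero => simpa using h
  | succ k ih =>
    cases l with
    | nil => simpa using h
    | cons F L => simpa using ih L h.2

theorem step_aux {W : Type*} {d : ℕ} (hd : 1 ≤ d) {K : Set (Finset W)} (hK : K.Finite)
    (hdc : ∀ F ∈ K, ∀ σ ⊆ F, σ.Nonempty → σ ∈ K) {F : Finset W} {L : List (Finset W)}
    (hFK : F ∈ K) (hF : F.card = d + 1)
    (hp : PureDim (generatedByL K [F] ∩ generatedByL K L) (d - 1)) :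
    ∃ A ⊆ F, ∀ σ ⊆ F, (∃ G ∈ L, σ ⊆ G) ↔ ¬ A ⊆ σ := by
  refine ⟨F.filter (fun a => ∃ G ∈ L, F.erase a ⊆ G), Finset.filter_subset _ _, fun σ hσ => ⟨?_, ?_⟩⟩
  · rintro ⟨G, hG, hσG⟩ hAσ
    obtain ⟨σ', hσ', hσσ'⟩ : ∃ σ' ∈ generatedByL K [F] ∩ generatedByL K L, σ ⊆ σ' := by
      rcases σ.eq_empty_or_nonempty with rfl | hne
      · obtain ⟨x, hx⟩ := hp.1
        exact ⟨x, hx, Finset.empty_subset _⟩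
      · have := hdc F hFK σ hσ hne
        exact ⟨σ, ⟨⟨this, F, by simp, hσ⟩, ⟨this, G, hG, hσG⟩⟩, subset_rfl⟩
    obtain ⟨μ, hμ, hσμ⟩ := exists_facet (hK.subset (fun x hx => hx.1.1)) hσ'
    have hc := hp.2 μ hμ
    obtain ⟨⟨-, F', hF', hμF⟩, ⟨-, G', hG', hμG⟩⟩ := hμ.1
    rw [List.mem_singleton] at hF'
    subst hF'
    obtain ⟨a, ha, hins⟩ := Finset.exists_eq_insert_iff.2 ⟨hμF, by omega⟩
    have hμe : F'.erase a = μ := by rw [← hins, Finset.erase_insert ha]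
    refine ha (hσμ (hσσ' (hAσ (Finset.mem_filter.2 ⟨?_, G', hG', ?_⟩))))
    · rw [← hins]; exact Finset.mem_insert_self _ _
    · rw [hμe]; exact hμG
  · intro h
    obtain ⟨a, ha, haσ⟩ := Finset.not_subset.1 h
    obtain ⟨haF, G, hG, haG⟩ := Finset.mem_filter.1 ha
    exact ⟨G, hG, fun x hx => haG (Finset.mem_erase.2 ⟨fun h => haσ (h ▸ hx), hσ hx⟩)⟩

/-- Lemma 5.5: each step of a shelling down of a triangulated `d`-ball to a
single `d`-simplex removes a face which is free for shelling. -/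
theorem shellingDown_free {N d : ℕ}
    (B : Geometry.SimplicialComplex ℝ (EuclideanSpace ℝ (Fin N)))
    (hfin : B.faces.Finite)
    (hball : IsBallSet d B.space)
    (hpure : PureDim B.faces d)
    (l : List (Finset (EuclideanSpace ℝ (Fin N))))
    (hdown : IsShellingDown B.faces d l (l.length - 1))
    (i : ℕ) (hi : i < l.length - 1) :
    IsBallSet (d - 1)
      (poly {σ | σ ∈ bdry (generatedByL B.faces (l.drop i)) d ∧ σ ⊆ l.getD i ∅}) := by
  obtain ⟨hnd, hmem, -, hsteps⟩ := hdown
  have hil : i < l.length := by omega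
  have hlK : ∀ G ∈ l, G ∈ B.faces := fun G hG => ((hmem G).1 hG).1
  have hlc : ∀ G ∈ l, G.card = d + 1 := fun G hG => hpure.2 G ((hmem G).1 hG)
  have hdc : ∀ F ∈ B.faces, ∀ σ ⊆ F, σ.Nonempty → σ ∈ B.faces :=
    fun F hF σ hσ hne => B.down_closed hF hσ hne
  have hinl : ∀ σ ∈ B.faces, ∃ F ∈ l, σ ⊆ F := fun σ hσ => by
    obtain ⟨μ, h1, h2⟩ := exists_facet hfin hσ
    exact ⟨μ, (hmem μ).2 h1, h2⟩
  have hdl : l.drop i = l[i] :: l.drop (i+1) := List.drop_eq_getElem_cons hil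
  have hgd : l.getD i ∅ = l[i] := List.getD_eq_getElem _ _ hil
  have hFl : l[i] ∈ l := List.getElem_mem hil
  have hd : 1 ≤ d := by
    by_contra hd0
    have hd0 : d = 0 := by omega
    obtain ⟨σ, ⟨hσK, F', hF', h1⟩, -, G, hG, h2⟩ := (hsteps i hi).1
    rw [List.mem_singleton, hgd] at hF'
    subst hF'
    have hne := Finset.card_pos.2 (B.nonempty_of_mem_faces hσK)
    have hGl : G ∈ l := List.mem_of_mem_drop hG
    have e1 : σ = l[i] := Finset.eq_of_subset_of_card_le h1 (by rw [hlc _ hFl]; omega)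
    have e2 : σ = G := Finset.eq_of_subset_of_card_le h2 (by rw [hlc _ hGl]; omega)
    have hnd2 : (l.drop i).Nodup := hnd.sublist (List.drop_sublist _ _)
    rw [hdl] at hnd2
    exact (List.nodup_cons.1 hnd2).1 (by rw [← e1, e2]; exact hG)
  have hstep : ∀ k (hk : k < l.length), ∃ A ⊆ l[k], ∀ σ ⊆ l[k],
      (∃ G ∈ l.drop (k+1), σ ⊆ G) ↔ ¬ A ⊆ σ := by
    intro k hk
    by_cases hk' : k < l.length - 1
    · have := hsteps k hk'
      rw [List.getD_eq_getElem _ _ hk] at this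
      exact step_aux hd hfin hdc (hlK _ (List.getElem_mem hk)) (hlc _ (List.getElem_mem hk)) this
    · refine ⟨∅, Finset.empty_subset _, fun σ _ => ?_⟩
      rw [List.drop_eq_nil_of_le (by omega)]
      simp
  have hsh : Sh d l := sh_of l fun k hk => ⟨hlc _ (List.getElem_mem hk), hstep k hk⟩
  -- the homeomorphism
  obtain ⟨e⟩ := hball
  set h : ES N → ES d := fun x => if hx : x ∈ B.space then (e ⟨x, hx⟩ : ES d) else 0 with hh
  set k : ES d → ES N := fun y => if hy : y ∈ Metric.closedBall (0 : ES d) 1 then (e.symm ⟨y, hy⟩ : ES N) else 0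
    with hk
  have hhv : ∀ x (hx : x ∈ B.space), h x = e ⟨x, hx⟩ := fun x hx => by simp only [hh, dif_pos hx]
  have hkv : ∀ y (hy : y ∈ Metric.closedBall (0 : ES d) 1), k y = e.symm ⟨y, hy⟩ := fun y hy => by
    simp only [hk, dif_pos hy]
  have hhc : ContinuousOn h B.space := by
    rw [continuousOn_iff_continuous_domRestrict]
    have : B.space.domRestrict h = fun x => (e x : ES d) := by
      ext1 x; exact hhv x.1 x.2
    rw [this]
    exact continuous_subtype_val.comp e.continuous
  have hkc : ContinuousOn k (Metric.closedBall 0 1) := by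
    rw [continuousOn_iff_continuous_domRestrict]
    have : (Metric.closedBall (0 : ES d) 1).domRestrict k = fun x => (e.symm x : ES N) := by
      ext1 x; exact hkv x.1 x.2
    rw [this]
    exact continuous_subtype_val.comp e.symm.continuous
  have hhk : ∀ x ∈ B.space, h x ∈ Metric.closedBall (0 : ES d) 1 ∧ k (h x) = x := by
    intro x hx
    have h1 : h x ∈ Metric.closedBall (0 : ES d) 1 := by rw [hhv x hx]; exact (e ⟨x, hx⟩).2
    refine ⟨h1, ?_⟩
    rw [hkv _ h1]
    have : (⟨h x, h1⟩ : Metric.closedBall (0 : ES d) 1) = e ⟨x, hx⟩ := Subtype.ext (hhv x hx)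
    rw [this, e.symm_apply_apply]
  have hkh : ∀ y ∈ Metric.closedBall (0 : ES d) 1, k y ∈ B.space ∧ h (k y) = y := by
    intro y hy
    have h1 : k y ∈ B.space := by rw [hkv y hy]; exact (e.symm ⟨y, hy⟩).2
    refine ⟨h1, ?_⟩
    rw [hhv _ h1]
    have : (⟨k y, h1⟩ : B.space) = e.symm ⟨y, hy⟩ := Subtype.ext (hkv y hy)
    rw [this, e.apply_symm_apply]
  have hinj : Set.InjOn h B.space := fun x hx y hy hxy => by
    rw [← (hhk x hx).2, ← (hhk y hy).2, hxy]
  have T1 : ∀ σ : Finset (ES N), σ.card = d → ∀ G1 ∈ l, ∀ G2 ∈ l, ∀ G3 ∈ l, σ ⊆ G1 → σ ⊆ G2 →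
      σ ⊆ G3 → G1 = G2 ∨ G1 = G3 ∨ G2 = G3 := by
    intro σ hσ G1 h1 G2 h2 G3 h3 s1 s2 s3
    obtain ⟨a, ha, rfl⟩ := Finset.exists_eq_insert_iff.2 ⟨s1, by rw [hσ, hlc _ h1]⟩
    obtain ⟨b, hb, rfl⟩ := Finset.exists_eq_insert_iff.2 ⟨s2, by rw [hσ, hlc _ h2]⟩
    obtain ⟨c, hc, rfl⟩ := Finset.exists_eq_insert_iff.2 ⟨s3, by rw [hσ, hlc _ h3]⟩
    by_contra! hne
    refine no_three hd B h hhc hinj ha hb hc ?_ ?_ ?_ hσ (hlK _ h1) (hlK _ h2) (hlK _ h3)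
    · rintro rfl; exact hne.1 rfl
    · rintro rfl; exact hne.2.1 rfl
    · rintro rfl; exact hne.2.2 rfl
  obtain ⟨A, hAF, hs⟩ := hstep i hil
  set F := l[i] with hFdef
  set L := l.drop (i+1) with hLdef
  have hsub : ∀ G ∈ F :: L, G ∈ l := fun G hG => by
    rw [← hdl] at hG; exact List.mem_of_mem_drop hG
  have hFc : F.card = d + 1 := hlc F hFl
  have hstar : ∀ σ : Finset (ES N), σ.card = d → (∀ v ∈ F, v ∉ A → v ∈ σ) → ∀ G ∈ F :: L, σ ⊆ G →
      ∃ G' ∈ F :: L, G' ≠ G ∧ σ ⊆ G' := by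
    intro σ hσ hFA
    refine star_closed F L hFc A hAF hs (sh_drop l hsh _) (fun σ hσ G1 h1 G2 h2 G3 h3 =>
      T1 σ hσ G1 (hsub _ h1) G2 (hsub _ h2) G3 (hsub _ h3)) σ hσ ?_
    intro x hx
    have hx' := (@Finset.mem_sdiff _ (fun a b => Classical.propDecidable (a = b)) _ _ _).1 hx
    exact hFA x hx'.1 hx'.2
  have hAne : A.Nonempty := by
    by_contra hA0
    rw [Finset.not_nonempty_iff_eq_empty] at hA0
    have hlen : 0 < L.length := by rw [hLdef, List.length_drop]; omega
    obtain ⟨G, hG⟩ := List.exists_mem_of_length_pos hlen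
    exact (hs ∅ (Finset.empty_subset _)).1 ⟨G, hG, Finset.empty_subset _⟩ (by rw [hA0])
  have hAneF : A ≠ F := by
    intro hAeq
    have hst : ∀ σ : Finset (ES N), σ.card = d → ∀ G ∈ F :: L, σ ⊆ G →
      ∃ G' ∈ F :: L, G' ≠ G ∧ σ ⊆ G' := fun σ hσ =>
        hstar σ hσ (fun v hv hvA => absurd (hAeq ▸ hv) hvA)
    have hall := conn_lemma l hsh ∅ {G | G ∈ F :: L} (by
      intro G hG G' hG' σ hσ _ h1 h2 hGS
      obtain ⟨G2, hG2, hne, h3⟩ := hst σ hσ G hGS h1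
      rcases T1 σ hσ G hG G' hG' G2 (hsub _ hG2) h1 h2 h3 with h | h | h
      · exact h ▸ hGS
      · exact absurd h.symm hne
      · rw [h]; exact hG2) ⟨F, hFl, Finset.empty_subset _, List.mem_cons_self⟩
    refine has_bdry hd B hfin h k hhc hkc hhk hkh (fun σ hσ => ?_) (fun G hG hGc a ha => ?_)
    · obtain ⟨G, hG, hσG⟩ := hinl σ hσ
      exact ⟨G, hlK G hG, hσG, hlc G hG⟩
    · obtain ⟨G1, hG1, hGG1⟩ := hinl G hG
      have : G = G1 := Finset.eq_of_subset_of_card_le hGG1 (by rw [hlc _ hG1, hGc])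
      subst this
      have hec : (G.erase a).card = d := by rw [Finset.card_erase_of_mem ha]; omega
      obtain ⟨G', hG', hne, hsG'⟩ := hst (G.erase a) hec G (hall G hG1 (Finset.empty_subset _))
        (Finset.erase_subset _ _)
      obtain ⟨b, hb, rfl⟩ := Finset.exists_eq_insert_iff.2 ⟨hsG', by rw [hec, hlc _ (hsub _ hG')]⟩
      refine ⟨b, fun hbG => ?_, hlK _ (hsub _ hG')⟩
      have hba : b = a := by
        by_contra hba
        exact hb (Finset.mem_erase.2 ⟨hba, hbG⟩)
      exact hne (by rw [hba, Finset.insert_erase ha])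
  have hpoly : poly {σ | σ ∈ bdry (generatedByL B.faces (l.drop i)) d ∧ σ ⊆ l.getD i ∅} =
      ⋃ v ∈ F \ A, convexHull ℝ ((F.erase v : Finset (ES N)) : Set (ES N)) := by
    rw [hgd, hdl]
    apply Set.Subset.antisymm
    · intro x hx
      simp only [poly, Set.mem_iUnion, exists_prop, Set.mem_ofPred_eq] at hx
      obtain ⟨σ, ⟨⟨-, θ, ⟨hθ, hθc, hθu⟩, hσθ⟩, hσF⟩, hxσ⟩ := hx
      have : ∃ v ∈ F, v ∉ A ∧ v ∉ σ := by
        by_contra! hno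
        obtain ⟨hθK, G, hG, hθG⟩ := hθ
        obtain ⟨G', hG', hne, hθG'⟩ := hstar θ hθc (fun v hv hvA => hσθ (hno v hv hvA)) G hG hθG
        exact hne (hθu.unique ⟨⟨hlK _ (hsub _ hG'), G', hG', subset_rfl⟩, hlc _ (hsub _ hG'), hθG'⟩
          ⟨⟨hlK _ (hsub _ hG), G, hG, subset_rfl⟩, hlc _ (hsub _ hG), hθG⟩)
      obtain ⟨v, hv, hvA, hvσ⟩ := this
      simp only [Set.mem_iUnion, exists_prop]
      refine ⟨v, Finset.mem_sdiff.2 ⟨hv, hvA⟩, convexHull_mono ?_ hxσ⟩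
      rw [Finset.coe_subset]
      exact fun y hy => Finset.mem_erase.2 ⟨fun h => hvσ (h ▸ hy), hσF hy⟩
    · intro x hx
      simp only [Set.mem_iUnion, exists_prop] at hx
      obtain ⟨v, hv, hxv⟩ := hx
      rw [Finset.mem_sdiff] at hv
      simp only [poly, Set.mem_iUnion, exists_prop, Set.mem_ofPred_eq]
      have hec : (F.erase v).card = d := by rw [Finset.card_erase_of_mem hv.1]; omega
      have heF : F.erase v ⊆ F := Finset.erase_subset _ _
      have heK : F.erase v ∈ B.faces := hdc F (hlK F hFl) _ heF (Finset.card_pos.1 (by omega))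
      have hegen : F.erase v ∈ generatedByL B.faces (F :: L) := ⟨heK, F, List.mem_cons_self, heF⟩
      refine ⟨F.erase v, ⟨⟨hegen, F.erase v, ⟨hegen, hec, F,
        ⟨⟨hlK F hFl, F, List.mem_cons_self, subset_rfl⟩, hFc, heF⟩, ?_⟩, subset_rfl⟩, heF⟩, hxv⟩
      rintro G ⟨⟨-, G', hG', hGG'⟩, hGc, hG⟩
      have : G = G' := Finset.eq_of_subset_of_card_le hGG' (by rw [hlc _ (hsub _ hG'), hGc])
      subst this
      rcases List.mem_cons.1 hG' with h | h
      · exact h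
      · refine absurd (fun x hx => ?_) ((hs _ heF).1 ⟨G, h, hG⟩)
        exact Finset.mem_erase.2 ⟨fun h => hv.2 (h ▸ hx), hAF hx⟩
  unfold IsBallSet
  rw [hpoly]
  exact ball_of_facets hd F A (B.indep (hlK F hFl)) hFc hAF hAne hAneF

end PaperFormal
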